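/- Let C be a commutative Noetherian ring with Krull dimension D < ∞ and let A = C[x_1,…,x_n]. Then for every r ≥ max(3, D+2) and every column b ∈ IUm_{2r+1}(A), the first standard basis column e_1 belongs to EO(2r+1,A)^{≤N} · b, where N = n(12r−8) + (nD + r(r−1)/2)·(r(r−1)/2 + ⌈(r−1)/2⌉ + 9r−2) + 9r−8. -/

import Mathlib

open Matrix

section OddDefs

variable {R : Type*} [CommRing R]

/-- Position of the middle basis vector `e_0` in the basis
`e_1,…,e_r,e_0,e_{-r},…,e_{-1}` of `R^{2r+1}`. -/
def midO (r : ℕ) : Fin (2 * r + 1) := ⟨r, by omega⟩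

/-- Position of `e_{-i}` given the position of `e_i` (odd case); fixes the middle position. -/
def negO (r : ℕ) (i : Fin (2 * r + 1)) : Fin (2 * r + 1) := ⟨2 * r - i.val, by omega⟩

/-- The split quadratic form `q(x) = x_0^2 + ∑_{i=1}^r x_i x_{-i}` on `R^{2r+1}`. -/
def quadO (r : ℕ) (x : Fin (2 * r + 1) → R) : R :=
  x (midO r) * x (midO r) + ∑ i : Fin r, x ⟨i.val, by omega⟩ * x ⟨2 * r - i.val, by omega⟩

/-- The odd split orthogonal group `O(2r+1,R)`, as a set of matrices. -/
def OO (r : ℕ) (R : Type*) [CommRing R] : Set (Matrix (Fin (2 * r + 1)) (Fin (2 * r + 1)) R) :=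
  {g | IsUnit g ∧ ∀ x : Fin (2 * r + 1) → R, quadO r (g.mulVec x) = quadO r x}

/-- Long root elementary transvection `T_{i,j}(ξ) = e + ξ e_{i,j} - ξ e_{-j,-i}` (odd case). -/
def TOlong (r : ℕ) (i j : Fin (2 * r + 1)) (ξ : R) :
    Matrix (Fin (2 * r + 1)) (Fin (2 * r + 1)) R :=
  1 + ξ • Matrix.single i j 1 - ξ • Matrix.single (negO r j) (negO r i) 1

/-- Short root elementary transvection
`T_{i,0}(ξ) = e + 2ξ e_{i,0} - ξ e_{0,-i} - ξ² e_{i,-i}`. -/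
def TOshort (r : ℕ) (i : Fin (2 * r + 1)) (ξ : R) :
    Matrix (Fin (2 * r + 1)) (Fin (2 * r + 1)) R :=
  1 + (2 * ξ) • Matrix.single i (midO r) 1
    - ξ • Matrix.single (midO r) (negO r i) 1
    - (ξ * ξ) • Matrix.single i (negO r i) 1

/-- Being an elementary orthogonal transvection (odd case). -/
def IsElemO (r : ℕ) (g : Matrix (Fin (2 * r + 1)) (Fin (2 * r + 1)) R) : Prop :=
  (∃ i j : Fin (2 * r + 1), ∃ ξ : R, i ≠ midO r ∧ j ≠ midO r ∧ i ≠ j ∧ i ≠ negO r j ∧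
      g = TOlong r i j ξ) ∨
  (∃ i : Fin (2 * r + 1), ∃ ξ : R, i ≠ midO r ∧ g = TOshort r i ξ)

/-- `EO(2r+1,R)^{≤N}` : products of at most `N` elementary orthogonal transvections. -/
def EOO (r N : ℕ) (R : Type*) [CommRing R] :
    Set (Matrix (Fin (2 * r + 1)) (Fin (2 * r + 1)) R) :=
  {g | ∃ L : List (Matrix (Fin (2 * r + 1)) (Fin (2 * r + 1)) R),
    L.length ≤ N ∧ (∀ m ∈ L, IsElemO r m) ∧ g = L.prod}

/-- `IUm_{2r+1}(R)` : columns `b` with `q(b) = 0` such that the row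
`(b_1,…,b_r,2b_0,b_{-r},…,b_{-1})` is unimodular. -/
def IUmO (r : ℕ) (R : Type*) [CommRing R] : Set (Fin (2 * r + 1) → R) :=
  {b | Ideal.span (Set.range fun i => if i = midO r then 2 * b i else b i) = ⊤ ∧ quadO r b = 0}

end OddDefs

/-!
A general position argument (the ideal generated by `r - 1` of the coordinates has height greater
than the dimension of `C`) yields a column whose first coordinate is `1` at the origin and, by a
Suslin-type choice of exponents `w i`, monic in `T` along the path
`x_i ↦ (1 - T) x_i + T ^ (w i - 1) (T - 1)` from the identity (`T = 0`) to the origin (`T = 1`).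

Because of monicity, only finitely many primes of `A[T]` contain the first coordinate and lie over
a given finite set of primes of `A`. Transvections that are trivial at `T = 1` move the second
coordinate off these primes, and then the first two coordinates generate an ideal that contains an
element `s` of `A` outside the given primes. The values of the column at `t` and at `t + s ^ m z`
differ by a bounded number of transvections. After `dim A + 1` such rounds the admissible
increments form the unit ideal, which connects `T = 0` with `T = 1`; there the first coordinate
is `1` and the column reduces to `e_1` directly.
-/

/-! ### Split vectors and transvections -/

/-- A column of the split module `R^{2r+1}`: `coord (inl i)` and `coord (inr i)` are the
coefficients of `e_i` and `e_{-i}`, so that negation of indices is `Sum.swap`, and `mid` is the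
coefficient of `e_0`. The number `r` of hyperbolic pairs is the size of `ι`. -/
@[ext]
structure SplitVector (ι R : Type*) where
  coord : ι ⊕ ι → R
  mid : R

namespace SplitVector

open Sum (inl inr swap)

variable {ι R S : Type*} [CommRing R] [CommRing S]

theorem swap_ne_self (a : ι ⊕ ι) : swap a ≠ a := by cases a <;> simp

/-- Base change. -/
def map (f : R →+* S) (v : SplitVector ι R) : SplitVector ι S := ⟨fun a => f (v.coord a), f v.mid⟩

@[simp] theorem coord_map (f : R →+* S) (v : SplitVector ι R) (a : ι ⊕ ι) :
    (v.map f).coord a = f (v.coord a) := rfl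

@[simp] theorem mid_map (f : R →+* S) (v : SplitVector ι R) : (v.map f).mid = f v.mid := rfl

section Quad

variable [Fintype ι]

/-- The split quadratic form. -/
def quad (v : SplitVector ι R) : R := v.mid ^ 2 + ∑ i, v.coord (inl i) * v.coord (inr i)

theorem quad_map (f : R →+* S) (v : SplitVector ι R) : (v.map f).quad = f v.quad := by simp [quad]

/-- Isotropic unimodular columns: no prime contains all `coord a`. For isotropic columns this is
unimodularity of `(b_1,…,b_r,2b_0,b_{-r},…,b_{-1})`, since a prime containing every `coord a`
contains `mid` as well. -/
structure IsotropicUnimodular (v : SplitVector ι R) : Prop where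
  quad_eq_zero : v.quad = 0
  exists_coord_notMem : ∀ P : Ideal R, P.IsPrime → ∃ a, v.coord a ∉ P

theorem mid_mem_of_coord_mem {v : SplitVector ι R} (hv : v.quad = 0) {P : Ideal R} [hP : P.IsPrime]
    (h : ∀ a, v.coord a ∈ P) : v.mid ∈ P := by
  refine hP.mem_of_pow_mem 2 ?_
  rw [eq_neg_of_add_eq_zero_left hv]
  exact P.neg_mem (P.sum_mem fun i _ => P.mul_mem_right _ (h _))

theorem IsotropicUnimodular.map (f : R →+* S) {v : SplitVector ι R} (hv : v.IsotropicUnimodular) :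
    (v.map f).IsotropicUnimodular where
  quad_eq_zero := by rw [quad_map, hv.quad_eq_zero, map_zero]
  exists_coord_notMem P _ := hv.exists_coord_notMem (P.comap f) inferInstance

end Quad

section Transvection

variable [DecidableEq ι]

/-- The action of the long root transvection `T_{a,b}(ξ)`. -/
def long (v : SplitVector ι R) (a b : ι ⊕ ι) (ξ : R) : SplitVector ι R where
  coord c := v.coord c + (if c = a then ξ * v.coord b else 0)
    - (if c = swap b then ξ * v.coord (swap a) else 0)
  mid := v.mid

/-- The action of the short root transvection `T_{a,0}(ξ)`. -/
def short (v : SplitVector ι R) (a : ι ⊕ ι) (ξ : R) : SplitVector ι R where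
  coord c := v.coord c + (if c = a then 2 * ξ * v.mid - ξ ^ 2 * v.coord (swap a) else 0)
  mid := v.mid - ξ * v.coord (swap a)

section

variable (v : SplitVector ι R) {a b c : ι ⊕ ι} (ξ : R)

@[simp] theorem mid_long : (v.long a b ξ).mid = v.mid := rfl

@[simp] theorem mid_short : (v.short a ξ).mid = v.mid - ξ * v.coord (swap a) := rfl

theorem coord_long_left (hab : a ≠ swap b) :
    (v.long a b ξ).coord a = v.coord a + ξ * v.coord b := by simp [long, hab]

theorem coord_long_swap_right (hab : a ≠ swap b) :
    (v.long a b ξ).coord (swap b) = v.coord (swap b) - ξ * v.coord (swap a) := by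
  simp [long, hab.symm]

theorem coord_long_of_ne (hca : c ≠ a) (hcb : c ≠ swap b) :
    (v.long a b ξ).coord c = v.coord c := by simp [long, hca, hcb]

theorem coord_short_self :
    (v.short a ξ).coord a = v.coord a + (2 * ξ * v.mid - ξ ^ 2 * v.coord (swap a)) := by
  simp [short]

theorem coord_short_of_ne (hca : c ≠ a) : (v.short a ξ).coord c = v.coord c := by
  simp [short, hca]

theorem map_long (f : R →+* S) : (v.long a b ξ).map f = (v.map f).long a b (f ξ) := by
  ext c <;> simp [long, apply_ite f]

theorem map_short (f : R →+* S) : (v.short a ξ).map f = (v.map f).short a (f ξ) := by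
  ext c <;> simp [short, apply_ite f, map_ofNat f 2]

theorem long_long_neg (hab : a ≠ b) (hab' : a ≠ swap b) :
    (v.long a b ξ).long a b (-ξ) = v := by
  have hb := coord_long_of_ne v ξ hab.symm (swap_ne_self b).symm
  have ha := coord_long_of_ne v ξ (swap_ne_self a) (fun h => hab (Sum.swap_leftInverse.injective h))
  ext c
  · by_cases hca : c = a
    · subst hca
      rw [coord_long_left _ _ hab', coord_long_left _ _ hab', hb]
      ring
    by_cases hcb : c = swap b
    · subst hcb
      rw [coord_long_swap_right _ _ hab', coord_long_swap_right _ _ hab', ha]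
      ring
    · rw [coord_long_of_ne _ _ hca hcb, coord_long_of_ne _ _ hca hcb]
  · rfl

theorem short_short_neg : (v.short a ξ).short a (-ξ) = v := by
  have ha := coord_short_of_ne v ξ (swap_ne_self a)
  ext c
  · by_cases hca : c = a
    · subst hca
      rw [coord_short_self, coord_short_self, ha, mid_short]
      ring
    · rw [coord_short_of_ne _ _ hca, coord_short_of_ne _ _ hca]
  · rw [mid_short, mid_short, ha]
    ring

end

theorem quad_long [Fintype ι] (v : SplitVector ι R) {a b : ι ⊕ ι} (hab : a ≠ b)
    (hab' : a ≠ swap b) (ξ : R) : (v.long a b ξ).quad = v.quad := by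
  rcases a with i | i <;> rcases b with j | j <;>
    have hij : i ≠ j := by rintro rfl; simp at hab hab'
  all_goals
    simp [quad, long, mul_add, add_mul, mul_sub, sub_mul, Finset.sum_add_distrib, hij, hij.symm]
    ring

theorem quad_short [Fintype ι] (v : SplitVector ι R) (a : ι ⊕ ι) (ξ : R) :
    (v.short a ξ).quad = v.quad := by
  rcases a with i | i <;>
  · simp [quad, short, mul_add, add_mul, Finset.sum_add_distrib]
    ring

end Transvection

end SplitVector

namespace SplitVector

open Sum (inl inr swap)

variable {ι R S : Type*} [DecidableEq ι] [CommRing R] [CommRing S] {I J : Ideal R} {M N : ℕ}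
  {u v w : SplitVector ι R}

/-- `w` arises from `v` by one elementary transvection with parameter in `I`. -/
inductive Step (I : Ideal R) : SplitVector ι R → SplitVector ι R → Prop
  | long (v : SplitVector ι R) {a b : ι ⊕ ι} (hab : a ≠ b) (hab' : a ≠ swap b) {ξ : R}
      (hξ : ξ ∈ I) : Step I v (v.long a b ξ)
  | short (v : SplitVector ι R) (a : ι ⊕ ι) {ξ : R} (hξ : ξ ∈ I) : Step I v (v.short a ξ)

/-- `w` arises from `v` by at most `N` elementary transvections with parameters in `I`. -/
inductive Reach (I : Ideal R) : ℕ → SplitVector ι R → SplitVector ι R → Prop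
  | refl (N : ℕ) (v : SplitVector ι R) : Reach I N v v
  | head {N : ℕ} {u v w : SplitVector ι R} (huv : Step I u v) (hvw : Reach I N v w) :
      Reach I (N + 1) u w

theorem Step.symm (h : Step I v w) : Step I w v := by
  cases h with
  | @long a b hab hab' ξ hξ =>
    simpa only [long_long_neg v ξ hab hab'] using
      Step.long (v.long a b ξ) hab hab' (I.neg_mem hξ)
  | @short a ξ hξ =>
    simpa only [short_short_neg] using Step.short (v.short a ξ) a (I.neg_mem hξ)

theorem Step.map (f : R →+* S) (h : Step I v w) : Step (I.map f) (v.map f) (w.map f) := by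
  cases h with
  | long hab hab' hξ =>
    rw [map_long]
    exact .long _ hab hab' (I.mem_map_of_mem f hξ)
  | short a hξ =>
    rw [map_short]
    exact .short _ a (I.mem_map_of_mem f hξ)

theorem Step.map_eq_map {f : R →+* S} (hf : I ≤ RingHom.ker f) (h : Step I v w) :
    w.map f = v.map f := by
  cases h with
  | long hab hab' hξ => rw [map_long, hf hξ]; ext <;> simp [SplitVector.long]
  | short a hξ => rw [map_short, hf hξ]; ext <;> simp [SplitVector.short]

theorem Step.ideal_mono (hIJ : I ≤ J) (h : Step I v w) : Step J v w := by
  cases h with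
  | long hab hab' hξ => exact .long _ hab hab' (hIJ hξ)
  | short a hξ => exact .short _ a (hIJ hξ)

theorem Step.coord_mem (h : Step I v w) {P : Ideal R} (hv : ∀ a, v.coord a ∈ P) (hm : v.mid ∈ P)
    (c : ι ⊕ ι) : w.coord c ∈ P := by
  cases h with
  | long hab hab' hξ =>
    refine P.sub_mem (P.add_mem (hv c) ?_) ?_ <;> split_ifs
    exacts [P.mul_mem_left _ (hv _), P.zero_mem, P.mul_mem_left _ (hv _), P.zero_mem]
  | short a hξ =>
    refine P.add_mem (hv c) ?_
    split_ifs
    exacts [P.sub_mem (P.mul_mem_left _ hm) (P.mul_mem_left _ (hv _)), P.zero_mem]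

theorem Reach.mono (h : Reach I N v w) (hNM : N ≤ M) : Reach I M v w := by
  induction h generalizing M with
  | refl => exact .refl _ _
  | head huv _ ih =>
    rcases M with _ | M
    · exact absurd hNM (Nat.not_succ_le_zero _)
    · exact .head huv (ih (Nat.le_of_succ_le_succ hNM))

theorem Step.reach (h : Step I v w) : Reach I 1 v w := .head h (.refl 0 w)

theorem Reach.trans (huv : Reach I N u v) (hvw : Reach I M v w) : Reach I (N + M) u w := by
  induction huv with
  | refl => exact hvw.mono (Nat.le_add_left _ _)
  | head h _ ih => rw [add_right_comm]; exact .head h (ih hvw)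

theorem Reach.ideal_mono (hIJ : I ≤ J) (h : Reach I N v w) : Reach J N v w := by
  induction h with
  | refl => exact .refl _ _
  | head huv _ ih => exact .head (huv.ideal_mono hIJ) ih

theorem Reach.map (f : R →+* S) (h : Reach I N v w) : Reach (I.map f) N (v.map f) (w.map f) := by
  induction h with
  | refl => exact .refl _ _
  | head huv _ ih => exact .head (huv.map f) ih

theorem Reach.map_top (f : R →+* S) (h : Reach I N v w) : Reach ⊤ N (v.map f) (w.map f) :=
  (h.map f).ideal_mono le_top

theorem Reach.map_eq_map {f : R →+* S} (hf : I ≤ RingHom.ker f) (h : Reach I N v w) :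
    w.map f = v.map f := by
  induction h with
  | refl => rfl
  | head huv _ ih => exact ih.trans (huv.map_eq_map hf)

theorem Reach.iterate {α : Type*} [DecidableEq α] {k : ℕ} (T : Finset α)
    (Inv : Finset α → SplitVector ι R → Prop)
    (step : ∀ U i v, i ∈ T → i ∉ U → U ⊆ T → Inv U v → ∃ w, Reach I k v w ∧ Inv (insert i U) w)
    (hv : Inv ∅ v) : ∃ w, Reach I (k * T.card) v w ∧ Inv T w := by
  suffices ∀ U ⊆ T, ∃ w, Reach I (k * U.card) v w ∧ Inv U w from this T subset_rfl
  intro U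
  induction U using Finset.induction_on with
  | empty => exact fun _ => ⟨v, .refl _ _, hv⟩
  | insert i U hi ih =>
    intro hU
    obtain ⟨hiT, hUT⟩ := Finset.insert_subset_iff.1 hU
    obtain ⟨w, hvw, hw⟩ := ih hUT
    obtain ⟨w', hww', hw'⟩ := step U i w hiT hi hUT hw
    exact ⟨w', (hvw.trans hww').mono (by rw [Finset.card_insert_of_notMem hi, mul_add_one]), hw'⟩

section Invariance

variable [Fintype ι]

theorem Step.quad_eq (h : Step I v w) : w.quad = v.quad := by
  cases h with
  | long hab hab' => exact quad_long v hab hab' _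
  | short a => exact quad_short v a _

theorem Reach.quad_eq (h : Reach I N v w) : w.quad = v.quad := by
  induction h with
  | refl => rfl
  | head huv _ ih => exact ih.trans huv.quad_eq

theorem Step.isotropicUnimodular (h : Step I v w) (hv : v.IsotropicUnimodular) :
    w.IsotropicUnimodular where
  quad_eq_zero := h.quad_eq.trans hv.quad_eq_zero
  exists_coord_notMem P hP := by
    by_contra! hw
    have hmid := mid_mem_of_coord_mem (h.quad_eq.trans hv.quad_eq_zero) hw
    obtain ⟨a, ha⟩ := hv.exists_coord_notMem P hP
    exact ha (h.symm.coord_mem hw hmid a)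

theorem Reach.isotropicUnimodular (h : Reach I N v w) (hv : v.IsotropicUnimodular) :
    w.IsotropicUnimodular := by
  induction h with
  | refl => exact hv
  | head huv _ ih => exact ih (huv.isotropicUnimodular hv)

end Invariance

end SplitVector

/-! ### Comparison with matrices -/

namespace SplitVector

open Sum (inl inr swap)

variable {R : Type*} {r : ℕ}

/-- The position of `e_{±i}` in the basis `e_1,…,e_r,e_0,e_{-r},…,e_{-1}`. -/
def position : Fin r ⊕ Fin r → Fin (2 * r + 1) :=
  Sum.elim (fun i => ⟨i, by omega⟩) fun i => ⟨2 * r - i, by omega⟩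

theorem negO_position (a : Fin r ⊕ Fin r) : negO r (position a) = position (swap a) := by
  rcases a with i | i
  · rfl
  · ext
    simp only [negO, position, Sum.elim_inl, Sum.elim_inr, Sum.swap_inr]
    omega

theorem position_injective : Function.Injective (position (r := r)) := by
  rintro (i | i) (j | j) h <;> simp only [position, Sum.elim_inl, Sum.elim_inr, Fin.mk.injEq] at h
  · exact congrArg inl (Fin.ext h)
  · omega
  · omega
  · exact congrArg inr (Fin.ext (by omega))

theorem position_ne_midO (a : Fin r ⊕ Fin r) : position a ≠ midO r := by
  rcases a with i | i <;>
    simp only [position, midO, Sum.elim_inl, Sum.elim_inr, ne_eq, Fin.mk.injEq] <;> omega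

theorem eq_midO_or_exists_position (k : Fin (2 * r + 1)) : k = midO r ∨ ∃ a, k = position a := by
  rcases lt_trichotomy k.val r with h | h | h
  · exact .inr ⟨inl ⟨k, h⟩, rfl⟩
  · exact .inl (Fin.ext h)
  · refine .inr ⟨inr ⟨2 * r - k, by omega⟩, Fin.ext ?_⟩
    simp only [position, Sum.elim_inr]
    omega

/-- The identification of `R^{2r+1}` with split vectors. -/
def ofColumn (x : Fin (2 * r + 1) → R) : SplitVector (Fin r) R :=
  ⟨fun a => x (position a), x (midO r)⟩

theorem ofColumn_injective : Function.Injective (ofColumn (R := R) (r := r)) := by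
  intro x y h
  funext k
  rcases eq_midO_or_exists_position k with rfl | ⟨a, rfl⟩
  · exact congrArg mid h
  · exact congrFun (congrArg coord h) a

variable [CommRing R]

theorem quad_ofColumn (x : Fin (2 * r + 1) → R) : (ofColumn x).quad = quadO r x := by
  simp only [quad, ofColumn, quadO, position, pow_two, Sum.elim_inl, Sum.elim_inr]

theorem isotropicUnimodular_ofColumn {x : Fin (2 * r + 1) → R} (hx : x ∈ IUmO r R) :
    (ofColumn x).IsotropicUnimodular where
  quad_eq_zero := (quad_ofColumn x).trans hx.2
  exists_coord_notMem P hP := by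
    by_contra! h
    have hmid := mid_mem_of_coord_mem ((quad_ofColumn x).trans hx.2) h
    refine hP.ne_top (top_le_iff.1 (hx.1 ▸ Ideal.span_le.2 ?_))
    rintro _ ⟨k, rfl⟩
    rcases eq_midO_or_exists_position k with rfl | ⟨a, rfl⟩
    · change ite _ _ _ ∈ P
      rw [if_pos rfl]
      exact P.mul_mem_left 2 hmid
    · change ite _ _ _ ∈ P
      rw [if_neg (position_ne_midO a)]
      exact h a

theorem ofColumn_TOlong_mulVec (x : Fin (2 * r + 1) → R) (a b : Fin r ⊕ Fin r) (ξ : R) :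
    ofColumn ((TOlong r (position a) (position b) ξ).mulVec x) = (ofColumn x).long a b ξ := by
  ext c <;>
    simp [TOlong, ofColumn, long, negO_position, Matrix.add_mulVec, Matrix.sub_mulVec,
      Matrix.single_mulVec, Function.update_apply,
      position_injective.eq_iff, (position_ne_midO _).symm]

theorem ofColumn_TOshort_mulVec (x : Fin (2 * r + 1) → R) (a : Fin r ⊕ Fin r) (ξ : R) :
    ofColumn ((TOshort r (position a) ξ).mulVec x) = (ofColumn x).short a ξ := by
  ext c
  · by_cases hca : c = a <;>
      simp [TOshort, ofColumn, short, negO_position, Matrix.add_mulVec, Matrix.sub_mulVec,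
        Matrix.single_mulVec, Function.update_apply,
        position_injective.eq_iff, position_ne_midO, hca]
    ring
  · simp [TOshort, ofColumn, short, negO_position, Matrix.add_mulVec, Matrix.sub_mulVec,
      Matrix.single_mulVec, Function.update_apply,
      (position_ne_midO _).symm]

theorem Step.exists_isElemO {I : Ideal R} {x : Fin (2 * r + 1) → R} {w : SplitVector (Fin r) R}
    (h : Step I (ofColumn x) w) : ∃ g, IsElemO r g ∧ ofColumn (g.mulVec x) = w := by
  generalize hv : ofColumn x = v at h
  cases h with
  | @long a b hab hab' ξ =>
    refine ⟨TOlong r (position a) (position b) ξ,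
      .inl ⟨_, _, _, position_ne_midO a, position_ne_midO b, position_injective.ne hab, ?_, rfl⟩,
      ?_⟩
    · rw [negO_position]
      exact position_injective.ne hab'
    · rw [ofColumn_TOlong_mulVec, hv]
  | @short a ξ =>
    refine ⟨TOshort r (position a) ξ, .inr ⟨_, _, position_ne_midO a, rfl⟩, ?_⟩
    rw [ofColumn_TOshort_mulVec, hv]

theorem one_mem_EOO (N : ℕ) : 1 ∈ EOO r N R := ⟨[], by simp⟩

theorem mul_mem_EOO {N : ℕ} {E g : Matrix (Fin (2 * r + 1)) (Fin (2 * r + 1)) R}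
    (hE : E ∈ EOO r N R) (hg : IsElemO r g) : E * g ∈ EOO r (N + 1) R := by
  obtain ⟨L, hLN, hL, rfl⟩ := hE
  refine ⟨L ++ [g], by simpa using hLN, fun m hm => ?_, by simp⟩
  rcases List.mem_append.1 hm with hm | hm
  · exact hL m hm
  · rwa [List.mem_singleton.1 hm]

theorem EOO_mono {M N : ℕ} (hMN : M ≤ N) : EOO r M R ⊆ EOO r N R :=
  fun _ ⟨L, hLM, hL⟩ => ⟨L, hLM.trans hMN, hL⟩

theorem Reach.exists_mem_EOO {I : Ideal R} {N : ℕ} {x : Fin (2 * r + 1) → R}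
    {w : SplitVector (Fin r) R} (h : Reach I N (ofColumn x) w) :
    ∃ E ∈ EOO r N R, ofColumn (E.mulVec x) = w := by
  generalize hv : ofColumn x = v at h
  induction h generalizing x with
  | refl N => exact ⟨1, one_mem_EOO N, by rw [Matrix.one_mulVec, hv]⟩
  | head huv _ ih =>
    subst hv
    obtain ⟨g, hg, hgx⟩ := huv.exists_isElemO
    obtain ⟨E, hE, hEx⟩ := ih hgx
    exact ⟨E * g, mul_mem_EOO hE hg, by rw [← Matrix.mulVec_mulVec, hEx]⟩

end SplitVector

/-! ### Prime avoidance and chains of primes -/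

section PrimeAvoidance

variable {R : Type*} [CommRing R]

theorem exists_mem_forall_mem_notMem {s : Finset (Ideal R)} {I P : Ideal R} [hP : P.IsPrime]
    (hI : ¬ I ≤ P) (hs : ∀ Q ∈ s, ¬ Q ≤ P) : ∃ η ∈ I, (∀ Q ∈ s, η ∈ Q) ∧ η ∉ P := by
  have hnot : ¬ I ⊓ s.inf id ≤ P := fun hle => (hP.inf_le.1 hle).elim hI fun hle =>
    let ⟨Q, hQ, hQP⟩ := hP.inf_le'.1 hle
    hs Q hQ hQP
  obtain ⟨η, ⟨hηI, hη⟩, hηP⟩ := SetLike.not_le_iff_exists.1 hnot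
  exact ⟨η, hηI, fun Q hQ => Finset.inf_le (f := id) hQ hη, hηP⟩

/-- The clause `y Q ∉ Q ∨ z Q ∉ Q` is necessary for the existence of `ξ` at the single prime `Q`;
the point is that one `ξ` serves all primes at which it holds. -/
theorem exists_forall_add_mul_notMem {s : Set (Ideal R)} (hs : s.Finite)
    (hprime : ∀ Q ∈ s, Q.IsPrime) {I : Ideal R} (hI : ∀ Q ∈ s, ¬ I ≤ Q) (y z : Ideal R → R) :
    ∃ ξ ∈ I, ∀ Q ∈ s, (y Q ∉ Q ∨ z Q ∉ Q) → y Q + ξ * z Q ∉ Q := by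
  classical
  lift s to Finset (Ideal R) using hs
  simp only [Finset.mem_coe] at hprime hI ⊢
  induction s using Finset.strongInduction with
  | H s ih =>
  obtain rfl | hne := s.eq_empty_or_nonempty
  · exact ⟨0, I.zero_mem, by simp⟩
  obtain ⟨P, hP, hmin⟩ := s.exists_minimal hne
  have herase : ∀ Q ∈ s.erase P, Q ∈ s := fun Q => Finset.mem_of_mem_erase
  obtain ⟨ξ, hξI, hξ⟩ := ih (s.erase P) (Finset.erase_ssubset hP)
    (fun Q hQ => hprime Q (herase Q hQ)) fun Q hQ => hI Q (herase Q hQ)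
  by_cases hdone : (y P ∉ P ∨ z P ∉ P) → y P + ξ * z P ∉ P
  · refine ⟨ξ, hξI, fun Q hQ => ?_⟩
    obtain rfl | hQP := eq_or_ne Q P
    exacts [hdone, hξ Q (Finset.mem_erase.2 ⟨hQP, hQ⟩)]
  push Not at hdone
  obtain ⟨hyz, hmem⟩ := hdone
  have hz : z P ∉ P := fun hz => hyz.elim
    (fun hy => hy (by simpa using P.sub_mem hmem (P.mul_mem_left ξ hz))) fun h => h hz
  have := hprime P hP
  -- Minimality of `P` is what provides a modification invisible to the other primes.
  obtain ⟨η, hηI, hη, hηP⟩ := exists_mem_forall_mem_notMem (s := s.erase P) (hI P hP)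
    fun Q hQ hQP => Finset.ne_of_mem_erase hQ (le_antisymm hQP (hmin (herase Q hQ) hQP))
  refine ⟨ξ + η, I.add_mem hξI hηI, fun Q hQ h hmemQ => ?_⟩
  obtain rfl | hQP := eq_or_ne Q P
  · have : η * z Q ∈ Q := by simpa [add_mul] using Q.sub_mem hmemQ hmem
    exact (Ideal.IsPrime.mem_or_mem ‹_› this).elim hηP hz
  · have hQe := Finset.mem_erase.2 ⟨hQP, hQ⟩
    refine hξ Q hQe h ?_
    simpa [add_mul, ← add_assoc] using Q.sub_mem hmemQ (Q.mul_mem_right (z Q) (hη Q hQe))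

end PrimeAvoidance

theorem eq_top_of_le_height_of_ringKrullDim_lt {R : Type*} [CommRing R] {J : Ideal R} {h : ℕ}
    (hdim : ringKrullDim R < h) (hJ : ∀ P : Ideal R, P.IsPrime → J ≤ P → (h : ℕ∞) ≤ P.height) :
    J = ⊤ := by
  by_contra hne
  obtain ⟨P, hP, hJP⟩ := Ideal.exists_le_maximal J hne
  have hle : (h : WithBot ℕ∞) ≤ P.height := WithBot.coe_le_coe.2 (hJ P hP.isPrime hJP)
  exact hdim.not_ge (hle.trans (Ideal.height_le_ringKrullDim_of_ne_top hP.ne_top))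

section PrimeChain

variable {R : Type*} [CommRing R]

/-- There is a chain of `h` strict inclusions of primes that starts above `K` and ends at `P`: the
prime `P` has height at least `h` relative to `K`. -/
inductive PrimeChain (K : Ideal R) : ℕ → Ideal R → Prop
  | zero {P : Ideal R} (hP : P.IsPrime) (hKP : K ≤ P) : PrimeChain K 0 P
  | succ {h : ℕ} {Q P : Ideal R} (hP : P.IsPrime) (hQ : PrimeChain K h Q) (hQP : Q < P) :
      PrimeChain K (h + 1) P

namespace PrimeChain

variable {K P : Ideal R} {h : ℕ}

theorem isPrime (hP : PrimeChain K h P) : P.IsPrime := by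
  cases hP <;> assumption

theorem le (hP : PrimeChain K h P) : K ≤ P := by
  induction hP with
  | zero _ hKP => exact hKP
  | succ _ _ hQP ih => exact ih.trans hQP.le

theorem le_height (hP : PrimeChain K h P) : (h : ℕ∞) ≤ P.height := by
  induction hP with
  | zero => exact zero_le
  | succ hP hQ hQP ih =>
    have := hQ.isPrime
    push_cast
    exact (add_le_add_left ih 1).trans (Ideal.height_add_one_le_of_lt_of_isPrime hQP)

theorem map_of_surjective {S : Type*} [CommRing S] {f : R →+* S} (hf : Function.Surjective f)
    (hP : PrimeChain (RingHom.ker f) h P) : PrimeChain ⊥ h (P.map f) := by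
  induction hP with
  | zero _ hKP => exact .zero (Ideal.map_isPrime_of_surjective hf hKP) bot_le
  | succ _ hQ hQP ih =>
    have hKP := hQ.le.trans hQP.le
    refine .succ (Ideal.map_isPrime_of_surjective hf hKP) ih
      (lt_of_le_of_ne (Ideal.map_mono hQP.le) fun hmap => hQP.ne ?_)
    have := congrArg (Ideal.comap f) hmap
    rwa [Ideal.comap_map_of_surjective' f hf, Ideal.comap_map_of_surjective' f hf,
      sup_eq_left.2 hQ.le, sup_eq_left.2 hKP] at this

end PrimeChain

/-- The minimal primes over `K + J` for `K ∈ F`. -/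
def minimalPrimesOver (F : Set (Ideal R)) (J : Ideal R) : Set (Ideal R) :=
  ⋃ K ∈ F, (K ⊔ J).minimalPrimes

section MinimalPrimesOver

variable {F : Set (Ideal R)} {J K P Q : Ideal R}

theorem mem_minimalPrimesOver : Q ∈ minimalPrimesOver F J ↔ ∃ K ∈ F, Q ∈ (K ⊔ J).minimalPrimes := by
  simp only [minimalPrimesOver, Set.mem_iUnion, exists_prop]

theorem finite_minimalPrimesOver [IsNoetherianRing R] (hF : F.Finite) (J : Ideal R) :
    (minimalPrimesOver F J).Finite :=
  hF.biUnion fun _ _ => Ideal.finite_minimalPrimes_of_isNoetherianRing R _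

theorem isPrime_of_mem_minimalPrimesOver (hQ : Q ∈ minimalPrimesOver F J) : Q.IsPrime := by
  obtain ⟨K, -, hQ⟩ := mem_minimalPrimesOver.1 hQ
  exact hQ.1.1

theorem le_of_mem_minimalPrimesOver (hQ : Q ∈ minimalPrimesOver F J) : J ≤ Q := by
  obtain ⟨K, -, hQ⟩ := mem_minimalPrimesOver.1 hQ
  exact le_sup_right.trans hQ.1.2

theorem exists_mem_minimalPrimesOver_le (hK : K ∈ F) (hP : P.IsPrime) (hKP : K ≤ P) (hJP : J ≤ P) :
    ∃ Q ∈ minimalPrimesOver F J, K ≤ Q ∧ Q ≤ P := by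
  obtain ⟨Q, hQ, hQP⟩ := Ideal.exists_minimalPrimes_le (sup_le hKP hJP)
  exact ⟨Q, mem_minimalPrimesOver.2 ⟨K, hK, hQ⟩, le_sup_left.trans hQ.1.2, hQP⟩

theorem PrimeChain.succ_of_notMem_minimalPrimesOver {h : ℕ} {x : R} (hK : K ∈ F) (hP : P.IsPrime)
    (hKP : K ≤ P) (hJP : J ≤ P) (hx : x ∈ P)
    (hchain : ∀ Q ∈ minimalPrimesOver F J, K ≤ Q → Q ≤ P → x ∉ Q ∧ PrimeChain K h Q) :
    PrimeChain K (h + 1) P := by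
  obtain ⟨Q, hQ, hKQ, hQP⟩ := exists_mem_minimalPrimesOver_le hK hP hKP hJP
  obtain ⟨hxQ, hQchain⟩ := hchain Q hQ hKQ hQP
  exact .succ hP hQchain (lt_of_le_of_ne hQP fun h => hxQ (h ▸ hx))

end MinimalPrimesOver

end PrimeChain

/-! ### General position -/

section GenericOff

variable {ι R : Type*} [CommRing R] {F : Set (Ideal R)} {U : Finset ι} {x x' : ι → R} {y : R}

/-- Away from the zeros of `y`, imposing the equations `x i = 0` for `i ∈ U` raises the height
relative to each member of `F` by at least the number of equations. -/
def GenericOff (F : Set (Ideal R)) (U : Finset ι) (x : ι → R) (y : R) : Prop :=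
  ∀ K ∈ F, ∀ P : Ideal R, P.IsPrime → K ≤ P → (∀ i ∈ U, x i ∈ P) → y ∉ P → PrimeChain K U.card P

theorem genericOff_empty : GenericOff F ∅ x y := fun _ _ _ hP hKP _ _ => .zero hP hKP

theorem GenericOff.insert [DecidableEq ι] (hx : GenericOff F U x y) {j : ι} (hj : j ∉ U)
    (hx' : ∀ i ∈ U, x' i = x i)
    (hxj : ∀ Q ∈ minimalPrimesOver F (Ideal.span (x '' U)), y ∉ Q → x' j ∉ Q) :
    GenericOff F (insert j U) x' y := by
  intro K hK P hP hKP hxP hyP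
  have hJP : Ideal.span (x '' U) ≤ P := by
    rw [Ideal.span_le, Set.image_subset_iff]
    exact fun i hi => (congrArg (· ∈ P) (hx' i hi)).mp (hxP i (Finset.mem_insert_of_mem hi))
  rw [Finset.card_insert_of_notMem hj]
  refine .succ_of_notMem_minimalPrimesOver hK hP hKP hJP (hxP j (Finset.mem_insert_self j U))
    fun Q hQ hKQ hQP => ?_
  have hyQ : y ∉ Q := fun h => hyP (hQP h)
  exact ⟨hxj Q hQ hyQ, hx K hK Q (isPrime_of_mem_minimalPrimesOver hQ) hKQ
    (fun i hi => le_of_mem_minimalPrimesOver hQ (Ideal.subset_span ⟨i, hi, rfl⟩)) hyQ⟩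

end GenericOff

namespace SplitVector

open Sum (inl inr swap)

variable {ι R : Type*} [DecidableEq ι] [CommRing R] {F : Set (Ideal R)}

/-- The equations `v_i = 0` for `i ∈ T` are in general position, up to a defect of one, wherever
some `v_{-i}` with `i ∈ T` does not vanish. -/
def Generic (F : Set (Ideal R)) (T : Finset ι) (v : SplitVector ι R) : Prop :=
  ∀ K ∈ F, ∀ P : Ideal R, P.IsPrime → K ≤ P → (∀ i ∈ T, v.coord (inl i) ∈ P) →
    (∃ i ∈ T, v.coord (inr i) ∉ P) → PrimeChain K (T.card - 1) P

/-- The invariant of the loop that turns a vector `v` generic for `T` into one generic for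
`insert k T`. The indices in `U ⊆ T` are those already treated by a transvection
`T_{j,-k}(ξ)`. -/
structure GenericExtension (F : Set (Ideal R)) (T : Finset ι) (k : ι) (v : SplitVector ι R)
    (U : Finset ι) (w : SplitVector ι R) : Prop where
  coord_inr : ∀ i, w.coord (inr i) = v.coord (inr i)
  genericOff : GenericOff F U (fun i => w.coord (inl i)) (v.coord (inr k))
  coord_inl_notMem : ∀ Q ∈ minimalPrimesOver F
      (Ideal.span (insert (v.coord (inr k)) ((fun i => v.coord (inl i)) '' T))),
    (∃ i ∈ U, v.coord (inr i) ∉ Q) → w.coord (inl k) ∉ Q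
  coord_inl_sub_mem : ∀ i ∈ T, w.coord (inl i) - v.coord (inl i) ∈ Ideal.span {v.coord (inr k)}

variable {T U : Finset ι} {j k : ι} {v w : SplitVector ι R}

/-- The two congruence conditions on `ξ` are compatible because `c` lies in all primes relevant to
the second. -/
theorem exists_add_mul_notMem_and_sub_mul_notMem [IsNoetherianRing R] (hF : F.Finite) (J : Ideal R)
    {J' : Ideal R} {c : R} (hc : c ∈ J') (a b d : R) :
    ∃ ξ, (∀ Q ∈ minimalPrimesOver F J, c ∉ Q → a + ξ * c ∉ Q) ∧
      ∀ Q ∈ minimalPrimesOver F J', (b ∉ Q ∨ d ∉ Q) → b - ξ * d ∉ Q := by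
  classical
  have hprime : ∀ Q ∈ minimalPrimesOver F J ∪ minimalPrimesOver F J', Q.IsPrime :=
    fun Q hQ => hQ.elim isPrime_of_mem_minimalPrimesOver isPrime_of_mem_minimalPrimesOver
  obtain ⟨ξ, -, hξ⟩ := exists_forall_add_mul_notMem (I := ⊤)
    ((finite_minimalPrimesOver hF J).union (finite_minimalPrimesOver hF J')) hprime
    (fun Q hQ => top_le_iff.not.2 (hprime Q hQ).ne_top)
    (fun Q => if c ∈ Q then b else a) (fun Q => if c ∈ Q then -d else c)
  refine ⟨ξ, fun Q hQ hcQ => ?_, fun Q hQ hbd => ?_⟩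
  · have := hξ Q (.inl hQ)
    rw [if_neg hcQ, if_neg hcQ] at this
    exact this (.inr hcQ)
  · have := hξ Q (.inr hQ)
    have hcQ := le_of_mem_minimalPrimesOver hQ hc
    rw [if_pos hcQ, if_pos hcQ, neg_mem_iff, mul_neg, ← sub_eq_add_neg] at this
    exact this hbd

theorem GenericExtension.exists_long [IsNoetherianRing R] (hF : F.Finite) (hk : k ∉ T) (hjT : j ∈ T)
    (hjU : j ∉ U) (hUT : U ⊆ T) (hw : GenericExtension F T k v U w) :
    ∃ ξ, GenericExtension F T k v (insert j U) (w.long (inl j) (inr k) ξ) := by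
  have hjk : j ≠ k := ne_of_mem_of_not_mem hjT hk
  set x : ι → R := fun i => w.coord (inl i)
  obtain ⟨ξ, hξ, hξ'⟩ := exists_add_mul_notMem_and_sub_mul_notMem hF (Ideal.span (x '' U))
    (J' := Ideal.span (insert (v.coord (inr k)) ((fun i => v.coord (inl i)) '' T)))
    (Ideal.subset_span (Set.mem_insert _ _)) (x j) (x k) (v.coord (inr j))
  have hnew_j : (w.long (inl j) (inr k) ξ).coord (inl j) = x j + ξ * v.coord (inr k) := by
    rw [coord_long_left _ _ (by simpa), hw.coord_inr]
  have hnew_k : (w.long (inl j) (inr k) ξ).coord (inl k) = x k - ξ * v.coord (inr j) := by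
    have := coord_long_swap_right w ξ (a := inl j) (b := inr k) (by simpa)
    rwa [Sum.swap_inl, hw.coord_inr] at this
  have hnew : ∀ i ≠ j, i ≠ k → (w.long (inl j) (inr k) ξ).coord (inl i) = x i :=
    fun i hij hik => coord_long_of_ne _ _ (by simpa) (by simpa)
  refine ⟨ξ, fun i => ?_, hw.genericOff.insert hjU ?_ ?_, ?_, fun i hiT => ?_⟩
  · rw [coord_long_of_ne _ _ (by simp) (by simp), hw.coord_inr]
  · exact fun i hi => hnew i (ne_of_mem_of_not_mem hi hjU) (ne_of_mem_of_not_mem (hUT hi) hk)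
  · exact fun Q hQ hkQ => hnew_j ▸ hξ Q hQ hkQ
  · rintro Q hQ ⟨i, hi, hiQ⟩
    rw [hnew_k]
    refine hξ' Q hQ ?_
    obtain rfl | hiU := Finset.mem_insert.1 hi
    exacts [.inr hiQ, .inl (hw.coord_inl_notMem Q hQ ⟨i, hiU, hiQ⟩)]
  · obtain rfl | hij := eq_or_ne i j
    · rw [hnew_j, add_sub_right_comm]
      exact Ideal.add_mem _ (hw.coord_inl_sub_mem i hiT)
        (Ideal.mul_mem_left _ _ (Ideal.mem_span_singleton_self _))
    · rw [hnew i hij (ne_of_mem_of_not_mem hiT hk)]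
      exact hw.coord_inl_sub_mem i hiT

theorem GenericExtension.generic_insert (hk : k ∉ T) (hv : Generic F T v)
    (hw : GenericExtension F T k v T w) : Generic F (insert k T) w := by
  intro K hK P hP hKP hinl ⟨i, hi, hiP⟩
  rw [Finset.card_insert_of_notMem hk, Nat.add_sub_cancel]
  rw [hw.coord_inr] at hiP
  by_cases hkP : v.coord (inr k) ∈ P
  · have hiT : i ∈ T := (Finset.mem_insert.1 hi).resolve_left fun h => hiP (h ▸ hkP)
    have hJP : Ideal.span (insert (v.coord (inr k)) ((fun i => v.coord (inl i)) '' T)) ≤ P := by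
      rw [Ideal.span_le, Set.insert_subset_iff, Set.image_subset_iff]
      refine ⟨hkP, fun i hi => ?_⟩
      have hsub := (Ideal.span_singleton_le_iff_mem P).2 hkP (hw.coord_inl_sub_mem i hi)
      exact (P.sub_mem_iff_right (hinl i (Finset.mem_insert_of_mem hi))).1 hsub
    rw [← Nat.sub_add_cancel (Finset.card_pos.2 ⟨i, hiT⟩)]
    refine .succ_of_notMem_minimalPrimesOver hK hP hKP hJP (hinl k (Finset.mem_insert_self k T))
      fun Q hQ hKQ hQP => ?_
    have hiQ : ∃ i ∈ T, v.coord (inr i) ∉ Q := ⟨i, hiT, fun h => hiP (hQP h)⟩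
    exact ⟨hw.coord_inl_notMem Q hQ hiQ, hv K hK Q (isPrime_of_mem_minimalPrimesOver hQ) hKQ
      (fun i hi => le_of_mem_minimalPrimesOver hQ
        (Ideal.subset_span (Set.mem_insert_of_mem _ ⟨i, hi, rfl⟩))) hiQ⟩
  · exact hw.genericOff K hK P hP hKP (fun i hi => hinl i (Finset.mem_insert_of_mem hi)) hkP

theorem Generic.exists_reach_insert [IsNoetherianRing R] (hF : F.Finite) (hk : k ∉ T)
    (hv : Generic F T v) : ∃ w, Reach ⊤ T.card v w ∧ Generic F (insert k T) w := by
  have hstart : GenericExtension F T k v ∅ v := ⟨fun _ => rfl, genericOff_empty, by simp, by simp⟩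
  obtain ⟨w, hvw, hw⟩ := Reach.iterate (I := ⊤) (k := 1) T (GenericExtension F T k v)
    (fun U j w hjT hjU hUT hw =>
      let ⟨ξ, hξ⟩ := hw.exists_long hF hk hjT hjU hUT
      ⟨_, (Step.long w (by simp) (by simpa using ne_of_mem_of_not_mem hjT hk)
        (Submodule.mem_top (x := ξ))).reach, hξ⟩) hstart
  exact ⟨w, one_mul T.card ▸ hvw, hw.generic_insert hk hv⟩

theorem exists_reach_generic [IsNoetherianRing R] (hF : F.Finite) (T : Finset ι)
    (v : SplitVector ι R) :
    ∃ w, Reach ⊤ (T.card * (T.card - 1) / 2) v w ∧ Generic F T w := by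
  induction T using Finset.induction_on with
  | empty => exact ⟨v, .refl _ _, fun _ _ _ _ _ _ ⟨i, hi, _⟩ => absurd hi (Finset.notMem_empty i)⟩
  | insert k T hk ih =>
    obtain ⟨u, hvu, hu⟩ := ih
    obtain ⟨w, huw, hw⟩ := hu.exists_reach_insert hF hk
    refine ⟨w, ?_, hw⟩
    rw [Finset.card_insert_of_notMem hk, Nat.triangle_succ]
    exact hvu.trans huw

/-- The invariant of the loop that removes the equation `v_{i₀} = 0` from a generic system. The
indices in `U` are those already treated by a transvection `T_{j,i₀}(ξ)`. -/
structure GenericElimination (F : Set (Ideal R)) (i₀ : ι) (v : SplitVector ι R) (U : Finset ι)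
    (w : SplitVector ι R) : Prop where
  coord_self : w.coord (inl i₀) = v.coord (inl i₀)
  genericOff : GenericOff F U (fun i => w.coord (inl i)) (v.coord (inl i₀))
  coord_inl_sub_mem : ∀ i, w.coord (inl i) - v.coord (inl i) ∈ Ideal.span {v.coord (inl i₀)}

variable {i₀ : ι}

theorem GenericElimination.exists_long [IsNoetherianRing R] (hF : F.Finite) (hj : j ≠ i₀)
    (hjU : j ∉ U) (hw : GenericElimination F i₀ v U w) :
    ∃ ξ, GenericElimination F i₀ v (insert j U) (w.long (inl j) (inl i₀) ξ) := by
  set x : ι → R := fun i => w.coord (inl i)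
  obtain ⟨ξ, -, hξ⟩ := exists_forall_add_mul_notMem (I := ⊤)
    (finite_minimalPrimesOver hF (Ideal.span (x '' U)))
    (fun Q hQ => isPrime_of_mem_minimalPrimesOver hQ)
    (fun Q hQ => top_le_iff.not.2 (isPrime_of_mem_minimalPrimesOver hQ).ne_top)
    (fun _ => x j) (fun _ => v.coord (inl i₀))
  have hnew_j : (w.long (inl j) (inl i₀) ξ).coord (inl j) = x j + ξ * v.coord (inl i₀) := by
    rw [coord_long_left _ _ (by simp), hw.coord_self]
  have hnew : ∀ i ≠ j, (w.long (inl j) (inl i₀) ξ).coord (inl i) = x i :=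
    fun i hij => coord_long_of_ne _ _ (by simpa) (by simp)
  refine ⟨ξ, (hnew i₀ hj.symm).trans hw.coord_self, hw.genericOff.insert hjU ?_ ?_, fun i => ?_⟩
  · exact fun i hi => hnew i (ne_of_mem_of_not_mem hi hjU)
  · intro Q hQ hQi₀
    rw [hnew_j]
    exact hξ Q hQ (.inr hQi₀)
  · obtain rfl | hij := eq_or_ne i j
    · rw [hnew_j, add_sub_right_comm]
      exact Ideal.add_mem _ (hw.coord_inl_sub_mem i)
        (Ideal.mul_mem_left _ _ (Ideal.mem_span_singleton_self _))
    · rw [hnew i hij]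
      exact hw.coord_inl_sub_mem i

variable [Fintype ι]

theorem GenericElimination.primeChain (hv : v.IsotropicUnimodular)
    (hgen : Generic F Finset.univ v) (hw : GenericElimination F i₀ v (Finset.univ.erase i₀) w)
    {K P : Ideal R} (hK : K ∈ F) (hP : P.IsPrime) (hKP : K ≤ P)
    (hinl : ∀ i ≠ i₀, w.coord (inl i) ∈ P) : PrimeChain K (Fintype.card ι - 1) P := by
  by_cases hi₀P : v.coord (inl i₀) ∈ P
  · have hv_inl : ∀ i, v.coord (inl i) ∈ P := fun i => by
      obtain rfl | hi := eq_or_ne i i₀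
      · exact hi₀P
      · have hsub := (Ideal.span_singleton_le_iff_mem P).2 hi₀P (hw.coord_inl_sub_mem i)
        exact (P.sub_mem_iff_right (hinl i hi)).1 hsub
    refine hgen K hK P hP hKP (fun i _ => hv_inl i) ?_
    obtain ⟨i | i, hi⟩ := hv.exists_coord_notMem P hP
    exacts [absurd (hv_inl i) hi, ⟨i, Finset.mem_univ i, hi⟩]
  · simpa only [Finset.card_erase_of_mem (Finset.mem_univ i₀), Finset.card_univ] using
      hw.genericOff K hK P hP hKP (fun i hi => hinl i (Finset.ne_of_mem_erase hi)) hi₀P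

theorem IsotropicUnimodular.exists_reach_primeChain [IsNoetherianRing R]
    (hv : v.IsotropicUnimodular) (hF : F.Finite) (i₀ : ι) :
    ∃ w, Reach ⊤ (Fintype.card ι * (Fintype.card ι - 1) / 2 + (Fintype.card ι - 1)) v w ∧
      ∀ K ∈ F, ∀ P : Ideal R, P.IsPrime → K ≤ P → (∀ i ≠ i₀, w.coord (inl i) ∈ P) →
        PrimeChain K (Fintype.card ι - 1) P := by
  obtain ⟨u, hvu, hu⟩ := exists_reach_generic hF Finset.univ v
  obtain ⟨w, huw, hw⟩ := Reach.iterate (I := ⊤) (k := 1) (Finset.univ.erase i₀)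
    (GenericElimination F i₀ u)
    (fun U j w hj hjU _ hw =>
      have hji₀ := Finset.ne_of_mem_erase hj
      let ⟨ξ, hξ⟩ := hw.exists_long hF hji₀ hjU
      ⟨_, (Step.long w (by simpa) (by simp) (Submodule.mem_top (x := ξ))).reach, hξ⟩)
    ⟨rfl, genericOff_empty, by simp⟩
  rw [one_mul, Finset.card_erase_of_mem (Finset.mem_univ i₀), Finset.card_univ] at huw
  exact ⟨w, hvu.trans huw, fun K hK P hP hKP hinl =>
    hw.primeChain (hvu.isotropicUnimodular hv) hu hK hP hKP hinl⟩

end SplitVector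

/-! ### Reduction to the first basis vector -/

namespace SplitVector

open Sum (inl inr swap)

variable {ι R : Type*} [DecidableEq ι] [CommRing R] {v : SplitVector ι R} {i₀ : ι}

/-- The standard basis column `e_{i₀}`. -/
def std (i₀ : ι) : SplitVector ι R := ⟨fun a => if a = inl i₀ then 1 else 0, 0⟩

variable [Fintype ι]

theorem eq_std_of_quad_eq_zero (hq : v.quad = 0) (hone : v.coord (inl i₀) = 1) (hmid : v.mid = 0)
    (hzero : ∀ a, a ≠ inl i₀ → a ≠ inr i₀ → v.coord a = 0) : v = std i₀ := by
  have hinr : v.coord (inr i₀) = 0 := by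
    have hsum : ∑ i, v.coord (inl i) * v.coord (inr i) = v.coord (inr i₀) := by
      rw [Finset.sum_eq_single i₀ (fun i _ hi => ?_) (by simp), hone, one_mul]
      rw [hzero (inl i) (by simpa) (by simp), zero_mul]
    simpa only [quad, hmid, hsum, ne_eq, OfNat.ofNat_ne_zero, not_false_eq_true, zero_pow,
      zero_add] using hq
  ext a
  · by_cases ha : a = inl i₀
    · simp [ha, hone, std]
    by_cases ha' : a = inr i₀
    · simp [ha', hinr, std]
    · simp [hzero a ha ha', std, ha]
  · exact hmid

theorem reach_std (hq : v.quad = 0) (hone : v.coord (inl i₀) = 1) :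
    Reach ⊤ (2 * Fintype.card ι - 1) v (std i₀) := by
  set T : Finset (ι ⊕ ι) := {inl i₀, inr i₀}ᶜ with hT
  have hmem : ∀ a, a ∈ T ↔ a ≠ inl i₀ ∧ a ≠ inr i₀ := by simp [hT]
  have hcard : T.card = 2 * Fintype.card ι - 2 := by
    rw [hT, Finset.card_compl, Finset.card_pair Sum.inl_ne_inr, Fintype.card_sum, two_mul]
  obtain ⟨w, hvw, hone, hzero⟩ := Reach.iterate (I := (⊤ : Ideal R)) (k := 1) T
    (fun U w => w.coord (inl i₀) = 1 ∧ ∀ a ∈ U, w.coord a = 0)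
    (fun U a w haT _ hUT ⟨hone, hzero⟩ => by
      obtain ⟨ha, ha'⟩ := (hmem a).1 haT
      refine ⟨_, (Step.long w ha ha' (Submodule.mem_top (x := -w.coord a))).reach, ?_, ?_⟩
      · rw [coord_long_of_ne _ _ ha.symm (by simp), hone]
      · intro c hc
        obtain rfl | hca := eq_or_ne c a
        · rw [coord_long_left _ _ ha', hone, mul_one, add_neg_cancel]
        · have hcU := (Finset.mem_insert.1 hc).resolve_left hca
          rw [coord_long_of_ne (b := inl i₀) _ _ hca ((hmem c).1 (hUT hcU)).2, hzero c hcU])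
    ⟨hone, by simp⟩
  have hshort := (Step.short w (inr i₀) (Submodule.mem_top (x := w.mid))).reach
  have hreach := hvw.trans hshort
  have hstd : w.short (inr i₀) w.mid = std i₀ := by
    refine eq_std_of_quad_eq_zero ?_ ?_ ?_ fun a ha ha' => ?_
    · rw [hreach.quad_eq, hq]
    · rw [coord_short_of_ne _ _ (by simp), hone]
    · rw [mid_short, Sum.swap_inr, hone, mul_one, sub_self]
    · rw [coord_short_of_ne _ _ ha', hzero a ((hmem a).2 ⟨ha, ha'⟩)]
  rw [hstd] at hreach
  have : 0 < Fintype.card ι := Fintype.card_pos_iff.2 ⟨i₀⟩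
  exact hreach.mono (by omega)

theorem exists_reach_coord_add (v : SplitVector ι R) {y : R}
    (hy : y ∈ Ideal.span ((fun i => v.coord (inl i)) '' {i₀}ᶜ)) :
    ∃ w, Reach ⊤ (Fintype.card ι - 1) v w ∧ w.coord (inl i₀) = v.coord (inl i₀) + y := by
  have hcoe : ({i₀}ᶜ : Set ι) = (Finset.univ.erase i₀ : Finset ι) := by ext; simp
  rw [hcoe] at hy
  obtain ⟨a, rfl⟩ := (Submodule.mem_span_image_finset_iff_exists_fun' R).1 hy
  obtain ⟨w, hvw, hw, -⟩ := Reach.iterate (I := (⊤ : Ideal R)) (k := 1) (Finset.univ.erase i₀)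
    (fun U w => w.coord (inl i₀) = v.coord (inl i₀) + ∑ j ∈ U, a j • v.coord (inl j) ∧
      ∀ j ≠ i₀, w.coord (inl j) = v.coord (inl j))
    (fun U j w hj hjU _ ⟨hw, hne⟩ => by
      have hj₀ := Finset.ne_of_mem_erase hj
      refine ⟨_, (Step.long w (a := inl i₀) (b := inl j) (by simpa using hj₀.symm) (by simp)
        (Submodule.mem_top (x := a j))).reach, ?_, fun i hi => ?_⟩
      · rw [coord_long_left _ _ (by simp), hw, hne j hj₀, Finset.sum_insert hjU, smul_eq_mul]
        ring
      · rw [coord_long_of_ne _ _ (by simpa) (by simp), hne i hi])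
    ⟨by simp, fun _ _ => rfl⟩
  rw [one_mul, Finset.card_erase_of_mem (Finset.mem_univ i₀), Finset.card_univ] at hvw
  exact ⟨w, hvw, hw⟩

end SplitVector

/-! ### Heights and leading coefficients -/

section Heights

open Polynomial

variable {R : Type*} [CommRing R]

theorem exists_isPrime_le_leadingCoeff_le {I : Ideal R[X]} {q : Ideal R} [hq : q.IsPrime]
    (hI : I.leadingCoeff ≤ q) :
    ∃ P : Ideal R[X], P.IsPrime ∧ I ≤ P ∧ P.leadingCoeff ≤ q := by
  let M : Submonoid R[X] :=
    { carrier := {f | f.leadingCoeff ∉ q}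
      one_mem' := by simpa using Ideal.one_notMem q
      mul_mem' := fun {f g} hf hg => by
        have hfg : f.leadingCoeff * g.leadingCoeff ∉ q := hq.mul_notMem hf hg
        rwa [Set.mem_ofPred_eq, leadingCoeff_mul' fun h => hfg (h ▸ q.zero_mem)] }
  have hdisj : Disjoint (I : Set R[X]) M := Set.disjoint_left.2 fun f hf hfM =>
    hfM (hI ((Ideal.mem_leadingCoeff I _).2 ⟨f, hf, rfl⟩))
  obtain ⟨P, hP, hIP, hPM⟩ := Ideal.exists_le_prime_disjoint I M hdisj
  refine ⟨P, hP, hIP, fun x hx => ?_⟩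
  obtain ⟨f, hf, rfl⟩ := (Ideal.mem_leadingCoeff P _).1 hx
  by_contra hfq
  exact Set.disjoint_left.1 hPM hf hfq

variable [IsNoetherianRing R]

theorem height_le_height_comap_C_add_one (P : Ideal R[X]) [P.IsPrime] :
    P.height ≤ (P.comap C).height + 1 := by
  set p := P.comap C
  let Rₚ := Localization.AtPrime p
  let := Polynomial.algebra R Rₚ
  have := Polynomial.isLocalization p.primeCompl Rₚ
  have hdisj : Disjoint (p.primeCompl.map C : Set R[X]) P :=
    Set.disjoint_left.2 fun _ ⟨_, hb, hba⟩ ha => hb (Ideal.mem_comap.2 (hba ▸ ha))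
  have hprime : (P.map (algebraMap R[X] Rₚ[X])).IsPrime :=
    IsLocalization.isPrime_of_isPrime_disjoint (p.primeCompl.map C) _ _ inferInstance hdisj
  obtain ⟨M, hM, hPM⟩ := Ideal.exists_le_maximal _ hprime.ne_top
  calc P.height = (P.map (algebraMap R[X] Rₚ[X])).height :=
        (IsLocalization.height_map_of_disjoint (p.primeCompl.map C) _ hdisj).symm
    _ ≤ M.height := Ideal.height_mono hPM
    _ = (M.under Rₚ).height + 1 := Polynomial.height_eq_height_add_one (M.under Rₚ) M
    _ ≤ (IsLocalRing.maximalIdeal Rₚ).height + 1 := by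
        gcongr
        exact IsLocalRing.le_maximalIdeal (hM.isPrime.under Rₚ).ne_top
    _ = p.height + 1 := by
        rw [← IsLocalization.height_under p.primeCompl,
          IsLocalization.AtPrime.under_maximalIdeal Rₚ p]

theorem height_le_height_comap_C (P : Ideal R[X]) [P.IsPrime] (hP : (P.comap C).map C = P) :
    P.height ≤ (P.comap C).height := by
  have : P.LiesOver (P.comap C) := ⟨rfl⟩
  have hbot : P.map (Ideal.Quotient.mk ((P.comap C).map (algebraMap R R[X]))) = ⊥ := by
    rw [Ideal.map_eq_bot_iff_le_ker, Ideal.mk_ker]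
    exact hP.ge
  have : Nontrivial (R[X] ⧸ (P.comap C).map (algebraMap R R[X])) :=
    Ideal.Quotient.nontrivial_iff.2 fun htop => Ideal.IsPrime.ne_top' (hP.symm.trans htop)
  simpa only [hbot, Ideal.height_bot, add_zero] using
    Ideal.height_le_height_add_of_liesOver (P.comap C) P

theorem le_height_of_leadingCoeff_le {I : Ideal R[X]} {h : ℕ∞}
    (hI : ∀ P : Ideal R[X], P.IsPrime → I ≤ P → h ≤ P.height) {q : Ideal R} (hq : q.IsPrime)
    (hIq : I.leadingCoeff ≤ q) : h ≤ q.height := by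
  obtain ⟨P, hP, hIP, hPq⟩ := exists_isPrime_le_leadingCoeff_le hIq
  have hle : P.comap C ≤ P.leadingCoeff := fun x hx =>
    (Ideal.mem_leadingCoeff P _).2 ⟨C x, hx, leadingCoeff_C x⟩
  refine (hI P hP hIP).trans ?_
  by_cases heq : P.comap C = P.leadingCoeff
  · exact (height_le_height_comap_C P (Ideal.map_C_comap_of_comap_eq_leadingCoeff P heq)).trans
      (Ideal.height_mono (hle.trans hPq))
  · exact (height_le_height_comap_C_add_one P).trans
      (Ideal.height_add_one_le_of_lt_of_isPrime ((lt_of_le_of_ne hle heq).trans_le hPq))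

end Heights

section MonicSubstitution

open Polynomial

theorem monic_eval₂_of_natDegree_coeff_lt {R S : Type*} [CommRing R] [CommRing S] [Nontrivial S]
    (φ : R →+* S[X]) {F : R[X]} {u : S[X]} (hF : (φ F.leadingCoeff).Monic) (hu : u.Monic)
    (hlt : ∀ k < F.natDegree, (φ (F.coeff k)).natDegree < u.natDegree) :
    (F.eval₂ φ u).Monic := by
  have hlead : (φ F.leadingCoeff * u ^ F.natDegree).Monic := hF.mul (hu.pow _)
  rw [eval₂_eq_sum_range, Finset.sum_range_succ, add_comm]
  refine hlead.add_of_left ((degree_sum_le _ _).trans_lt ?_)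
  rw [Finset.sup_lt_iff (bot_lt_iff_ne_bot.2 (degree_ne_bot.2 hlead.ne_zero))]
  intro k hk
  rw [Finset.mem_range] at hk
  refine degree_lt_degree ?_
  calc (φ (F.coeff k) * u ^ k).natDegree
      ≤ (φ (F.coeff k)).natDegree + k * u.natDegree :=
        natDegree_mul_le.trans (Nat.add_le_add_left natDegree_pow_le _)
    _ < (k + 1) * u.natDegree := by linarith [hlt k hk]
    _ ≤ F.natDegree * u.natDegree := Nat.mul_le_mul_right _ hk
    _ ≤ (φ F.leadingCoeff * u ^ F.natDegree).natDegree := by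
        rw [hF.natDegree_mul (hu.pow _), hu.natDegree_pow]
        exact Nat.le_add_left _ _

variable {R S : Type*} [CommRing R] [CommRing S] [Algebra R S]

theorem exists_natDegree_aeval_le {σ : Type*} (w : σ → ℕ) (f : MvPolynomial σ R) :
    ∃ B : ℕ, ∀ u : σ → S[X], (∀ i, (u i).natDegree ≤ w i) →
      (MvPolynomial.aeval u f).natDegree ≤ B := by
  induction f using MvPolynomial.induction_on with
  | C a =>
    refine ⟨0, fun u _ => ?_⟩
    rw [MvPolynomial.aeval_C, Polynomial.algebraMap_apply, natDegree_C]
  | add f g hf hg =>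
    obtain ⟨B, hB⟩ := hf
    obtain ⟨B', hB'⟩ := hg
    refine ⟨max B B', fun u hu => ?_⟩
    rw [map_add]
    exact (natDegree_add_le _ _).trans (max_le_max (hB u hu) (hB' u hu))
  | mul_X f i hf =>
    obtain ⟨B, hB⟩ := hf
    refine ⟨B + w i, fun u hu => ?_⟩
    rw [map_mul, MvPolynomial.aeval_X]
    exact natDegree_mul_le.trans (add_le_add (hB u hu) (hu i))

theorem aeval_eq_eval₂_finSuccEquiv {n : ℕ} (u : Fin (n + 1) → S)
    (f : MvPolynomial (Fin (n + 1)) R) :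
    MvPolynomial.aeval u f = (MvPolynomial.finSuccEquiv R n f).eval₂
      (MvPolynomial.aeval fun i : Fin n => u i.succ).toRingHom (u 0) := by
  suffices MvPolynomial.aeval u = (aevalTower (MvPolynomial.aeval fun i : Fin n => u i.succ)
      (u 0)).comp (MvPolynomial.finSuccEquiv R n).toAlgHom from DFunLike.congr_fun this f
  ext i
  refine Fin.cases ?_ (fun i => ?_) i
  · simp [MvPolynomial.finSuccEquiv_X_zero]
  · simp [MvPolynomial.finSuccEquiv_X_succ]

/-- A Suslin-type lemma: leading coefficients are taken one variable at a time, the degree of each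
substituted polynomial dominating all the later ones. -/
theorem exists_mem_forall_aeval_monic [IsNoetherianRing R] [Nontrivial S] {h : ℕ}
    (hdim : ringKrullDim R < h) (m : ℕ) {n : ℕ} (I : Ideal (MvPolynomial (Fin n) R))
    (hI : ∀ P : Ideal (MvPolynomial (Fin n) R), P.IsPrime → I ≤ P → (h : ℕ∞) ≤ P.height) :
    ∃ f ∈ I, ∃ w : Fin n → ℕ, (∀ i, m ≤ w i) ∧ ∀ u : Fin n → S[X],
      (∀ i, (u i).Monic ∧ (u i).natDegree = w i) → (MvPolynomial.aeval u f).Monic := by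
  induction n with
  | zero =>
    rw [← ringKrullDim_mvPolynomial_of_isEmpty (Fin 0)] at hdim
    have htop : I = ⊤ := eq_top_of_le_height_of_ringKrullDim_lt hdim hI
    exact ⟨1, by rw [htop]; trivial, fun _ => m, fun _ => le_rfl, fun u _ => by
      rw [map_one]; exact monic_one⟩
  | succ n ih =>
    let e := (MvPolynomial.finSuccEquiv R n).toRingEquiv
    have hI' (P : Ideal (MvPolynomial (Fin n) R)[X]) (hP : P.IsPrime) (hIP : I.map e ≤ P) :
        (h : ℕ∞) ≤ P.height := by
      rw [← e.height_comap]
      exact hI _ inferInstance (Ideal.map_le_iff_le_comap.1 hIP)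
    obtain ⟨g, hg, w, hmw, hw⟩ :=
      ih (I.map e).leadingCoeff fun _ => le_height_of_leadingCoeff_le hI'
    obtain ⟨F, hF, rfl⟩ := (Ideal.mem_leadingCoeff _ _).1 hg
    obtain ⟨f, hf, rfl⟩ := (Ideal.mem_map_iff_of_surjective e e.surjective).1 hF
    choose B hB using fun k => exists_natDegree_aeval_le (S := S) w ((e f).coeff k)
    refine ⟨f, hf, Fin.cons (∑ k ∈ Finset.range (e f).natDegree, B k + 1 + m) w,
      Fin.cases (Nat.le_add_left _ _) hmw, fun u hu => ?_⟩
    have hu_succ (i : Fin n) := hu i.succ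
    rw [aeval_eq_eval₂_finSuccEquiv]
    refine monic_eval₂_of_natDegree_coeff_lt _ (hw _ hu_succ) (hu 0).1 fun k hk => ?_
    calc (MvPolynomial.aeval (fun i : Fin n => u i.succ) ((e f).coeff k)).natDegree
        ≤ B k := hB k _ fun i => (hu_succ i).2.le
      _ ≤ ∑ k ∈ Finset.range (e f).natDegree, B k :=
        Finset.single_le_sum (fun _ _ => Nat.zero_le _) (Finset.mem_range.2 hk)
      _ < (u 0).natDegree := by rw [(hu 0).2, Fin.cons_zero]; omega

end MonicSubstitution

/-! ### Values of a column at congruent arguments -/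

theorem exists_forall_pow_mul_eq_zero_of_pow_succ_mul_eq_zero {R : Type*} [CommRing R]
    [IsNoetherianRing R] (s : R) : ∃ K : ℕ, ∀ x : R, s ^ (K + 1) * x = 0 → s ^ K * x = 0 := by
  let f := LinearMap.mulLeft R s
  obtain ⟨K, hK⟩ := monotone_stabilizes_iff_noetherian.2 ‹IsNoetherianRing R› f.iterateKer
  have hmem (k : ℕ) (x : R) : x ∈ f.iterateKer k ↔ s ^ k * x = 0 := by
    change (f ^ k) x = 0 ↔ _
    rw [LinearMap.pow_mulLeft, LinearMap.mulLeft_apply]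
  exact ⟨K, fun x hx => (hmem K x).1 (hK _ K.le_succ ▸ (hmem (K + 1) x).2 hx)⟩

namespace SplitVector

section Congruence

open Sum (inl inr swap)

variable {ι R : Type*} [DecidableEq ι] [CommRing R] {I : Ideal R} {v w : SplitVector ι R}

theorem exists_reach_coord_add_combination (v : SplitVector ι R) {a b c : ι ⊕ ι} (hab : a ≠ b)
    (hab' : a ≠ swap b) (hac : a ≠ c) (hac' : a ≠ swap c) (hcb : c ≠ swap b) {ξ η : R} (hξ : ξ ∈ I)
    (hη : η ∈ I) :
    ∃ w, Reach I 2 v w ∧ w.mid = v.mid ∧ w.coord a = v.coord a + (ξ * v.coord b + η * v.coord c) ∧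
      ∀ d, d ≠ a → d ≠ swap b → d ≠ swap c → w.coord d = v.coord d := by
  refine ⟨_, (Step.long v hab hab' hξ).reach.trans (Step.long _ hac hac' hη).reach, rfl, ?_,
    fun d hda hdb hdc => ?_⟩
  · rw [coord_long_left _ _ hac', coord_long_left _ _ hab', coord_long_of_ne _ _ hac.symm hcb,
      add_assoc]
  · rw [coord_long_of_ne _ _ hda hdc, coord_long_of_ne _ _ hda hdb]

theorem exists_reach_inl_add_combination (v : SplitVector ι R) {i j k : ι} (hij : i ≠ j)
    (hik : i ≠ k) {ξ η : R} (hξ : ξ ∈ I) (hη : η ∈ I) :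
    ∃ w, Reach I 2 v w ∧
      w.coord (inl i) = v.coord (inl i) + (ξ * v.coord (inl j) + η * v.coord (inl k)) ∧
      ∀ l ≠ i, w.coord (inl l) = v.coord (inl l) := by
  obtain ⟨w, hvw, -, hi, hw⟩ := exists_reach_coord_add_combination v (a := inl i) (b := inl j)
    (c := inl k) (by simpa) (by simp) (by simpa) (by simp) (by simp) hξ hη
  exact ⟨w, hvw, hi, fun l hl => hw _ (by simpa) (by simp) (by simp)⟩

theorem exists_reach_inl_add_mul_add_mul (v : SplitVector ι R) {i j k : ι} (hij : i ≠ j)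
    (hik : i ≠ k) (hjk : j ≠ k) {ξ η : R} (hξ : ξ ∈ I) (hη : η ∈ I) :
    ∃ w, Reach I 2 v w ∧ w.coord (inl i) = v.coord (inl i) + ξ * v.coord (inl j) ∧
      w.coord (inl k) = v.coord (inl k) + η * v.coord (inl j) ∧
      w.coord (inl j) = v.coord (inl j) := by
  refine ⟨_, (Step.long v (a := inl i) (b := inl j) (by simpa) (by simp) hξ).reach.trans
    (Step.long _ (a := inl k) (b := inl j) (by simpa using hjk.symm) (by simp) hη).reach, ?_⟩
  simp [long, hij.symm, hik, hik.symm, hjk]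

theorem exists_reach_inl_add_pow_mul (v : SplitVector ι R) {i j k : ι} (hij : i ≠ j) (hik : i ≠ k)
    (hjk : j ≠ k) {s x y : R}
    (hxy : x * v.coord (inl i) + y * v.coord (inl j) + s * v.coord (inl k) = s) (m : ℕ) (η : R) :
    ∃ w y', Reach (Ideal.span {s ^ m}) 7 v w ∧
      w.coord (inl i) = v.coord (inl i) + s ^ (2 * m + 3) * η ∧
      w.coord (inl j) = v.coord (inl j) ∧
      x * w.coord (inl i) + y' * w.coord (inl j) + s * w.coord (inl k) = s := by
  have hs (z : R) : s ^ m * z ∈ Ideal.span {s ^ m} :=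
    Ideal.mul_mem_right _ _ (Ideal.mem_span_singleton_self _)
  -- The second pair of transvections fixes `x * v_i + s * v_k`, so the third undoes the first.
  obtain ⟨v₁, h₁, hj₁, hne₁⟩ :=
    exists_reach_inl_add_combination v hij.symm hjk (hs (s * x)) (hs (s * s))
  obtain ⟨v₂, h₂, hi₂, hk₂, hj₂⟩ :=
    exists_reach_inl_add_mul_add_mul v₁ hij hik hjk (hs (s * η)) (hs (-(x * η)))
  obtain ⟨v₃, h₃, hj₃, hne₃⟩ :=
    exists_reach_inl_add_combination v₂ hij.symm hjk (hs (-(s * x))) (hs (-(s * s)))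
  have hj : v₃.coord (inl j) = v.coord (inl j) := by
    rw [hj₃, hi₂, hj₂, hk₂, hj₁, hne₁ i hij, hne₁ k hjk.symm]
    ring
  let ζ := s ^ m * (-(s * η) + s ^ m * s * s * η * y)
  have hi : (v₃.long (inl i) (inl j) ζ).coord (inl i) =
      v.coord (inl i) + s ^ (2 * m + 3) * η := by
    rw [coord_long_left _ _ (by simp), hj, hne₃ i hij, hi₂, hj₁, hne₁ i hij]
    linear_combination s ^ (2 * m + 2) * η * hxy
  refine ⟨v₃.long (inl i) (inl j) ζ, y + x * (s ^ m * s * η) * (1 - s ^ m * s * y),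
    ((h₁.trans h₂).trans h₃).trans (Step.long v₃ (by simpa) (by simp) (hs _)).reach, hi, ?_, ?_⟩
  · rw [coord_long_of_ne _ _ (by simpa using hij.symm) (by simp), hj]
  · rw [hi, coord_long_of_ne _ _ (by simpa using hij.symm) (by simp), hj,
      coord_long_of_ne _ _ (by simpa using hik.symm) (by simp), hne₃ k hjk.symm, hk₂, hj₁,
      hne₁ k hjk.symm]
    linear_combination (1 - s ^ (2 * m + 2) * x * η) * hxy

theorem exists_reach_inl_pair_add_pow_mul (v : SplitVector ι R) {i j k : ι} (hij : i ≠ j)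
    (hik : i ≠ k) (hjk : j ≠ k) {s x y : R}
    (hxy : x * v.coord (inl i) + y * v.coord (inl j) = s) (m : ℕ) (η θ : R) :
    ∃ w, Reach (Ideal.span {s ^ m}) 14 v w ∧
      w.coord (inl i) = v.coord (inl i) + s ^ (2 * m + 3) * η ∧
      w.coord (inl j) = v.coord (inl j) + s ^ (2 * m + 3) * θ := by
  let z := v.coord (inl k)
  obtain ⟨u, y', hvu, hi, hj, hu⟩ := exists_reach_inl_add_pow_mul v hij hik hjk (s := s)
    (x := (1 - z) * x) (y := (1 - z) * y) (by linear_combination (1 - z) * hxy) m η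
  obtain ⟨w, -, huw, hj', hi', -⟩ := exists_reach_inl_add_pow_mul u hij.symm hjk hik (s := s)
    (x := y') (y := (1 - z) * x) (by linear_combination hu) m θ
  exact ⟨w, hvu.trans huw, hi'.trans hi, by rw [hj', hj]⟩

variable [Fintype ι]

theorem exists_reach_long_coord_eq_off_pair {i j : ι} (hij : i ≠ j) {s x y : R}
    (hi : v.coord (inl i) = w.coord (inl i)) (hj : v.coord (inl j) = w.coord (inl j))
    (hxy : x * w.coord (inl i) + y * w.coord (inl j) = s)
    (hcoord : ∀ a, w.coord a - v.coord a ∈ Ideal.span {s} * I) :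
    ∃ u, Reach I (4 * Fintype.card ι - 8) v u ∧ u.mid = v.mid ∧
      ∀ a, a ≠ inr i → a ≠ inr j → u.coord a = w.coord a := by
  set T : Finset (ι ⊕ ι) := {inl i, inl j, inr i, inr j}ᶜ with hT
  have hmem : ∀ a, a ∈ T ↔ a ≠ inl i ∧ a ≠ inl j ∧ a ≠ inr i ∧ a ≠ inr j := by simp [hT]
  have hcard : T.card = 2 * Fintype.card ι - 4 := by
    rw [hT, Finset.card_compl, Fintype.card_sum, two_mul, Finset.card_insert_of_notMem (by simpa),
      Finset.card_insert_of_notMem (by simp), Finset.card_pair (by simpa)]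
  obtain ⟨u, hvu, hui, huj, hum, huT, -⟩ := Reach.iterate (I := I) (k := 2) T
    (fun U u => u.coord (inl i) = w.coord (inl i) ∧ u.coord (inl j) = w.coord (inl j) ∧
      u.mid = v.mid ∧ (∀ a ∈ U, u.coord a = w.coord a) ∧
      ∀ a ∈ T, a ∉ U → u.coord a = v.coord a)
    (fun U a u haT haU hUT ⟨hui, huj, hum, huU, huT⟩ => by
      obtain ⟨hai, haj, hai', haj'⟩ := (hmem a).1 haT
      obtain ⟨z, hz, hzs⟩ := Ideal.mem_span_singleton_mul.1 (hcoord a)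
      obtain ⟨u', huu', hum', hua, hne⟩ := exists_reach_coord_add_combination u hai hai' haj haj'
        (by simp) (I.mul_mem_right x hz) (I.mul_mem_right y hz)
      refine ⟨u', huu', by rw [hne _ hai.symm (by simp) (by simp), hui],
        by rw [hne _ haj.symm (by simp) (by simp), huj], hum'.trans hum, fun c hc => ?_,
        fun c hcT hc => ?_⟩
      · obtain rfl | hca := eq_or_ne c a
        · rw [hua, hui, huj, huT c haT haU]
          linear_combination z * hxy + hzs
        · have hcU := (Finset.mem_insert.1 hc).resolve_left hca
          obtain ⟨-, -, hci, hcj⟩ := (hmem c).1 (hUT hcU)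
          rw [hne c hca hci hcj, huU c hcU]
      · obtain ⟨hca, hcU⟩ := not_or.1 (mt Finset.mem_insert.2 hc)
        obtain ⟨-, -, hci, hcj⟩ := (hmem c).1 hcT
        rw [hne c hca hci hcj, huT c hcT hcU])
    ⟨hi, hj, rfl, by simp, fun _ _ _ => rfl⟩
  refine ⟨u, hvu.mono (by omega), hum, fun a hai haj => ?_⟩
  by_cases hai' : a = inl i
  · rw [hai', hui]
  by_cases haj' : a = inl j
  · rw [haj', huj]
  · exact huT a ((hmem a).2 ⟨hai', haj', hai, haj⟩)

theorem exists_reach_coord_eq_off_pair {i j : ι} (hij : i ≠ j) {s x y : R}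
    (hi : v.coord (inl i) = w.coord (inl i)) (hj : v.coord (inl j) = w.coord (inl j))
    (hxy : x * w.coord (inl i) + y * w.coord (inl j) = s)
    (hcoord : ∀ a, w.coord a - v.coord a ∈ Ideal.span {s} * I)
    (hmid : w.mid - v.mid ∈ Ideal.span {s} * I) :
    ∃ u, Reach I (4 * Fintype.card ι - 6) v u ∧ u.mid = w.mid ∧
      ∀ a, a ≠ inr i → a ≠ inr j → u.coord a = w.coord a := by
  obtain ⟨u, hvu, hum, hu⟩ := exists_reach_long_coord_eq_off_pair hij hi hj hxy hcoord
  obtain ⟨z, hz, hzs⟩ := Ideal.mem_span_singleton_mul.1 hmid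
  have hι : 2 ≤ Fintype.card ι := (Finset.card_pair hij).ge.trans (Finset.card_le_univ _)
  refine ⟨_, ((hvu.trans (Step.short u (inr i) (I.mul_mem_right (-x) hz)).reach).trans
    (Step.short _ (inr j) (I.mul_mem_right (-y) hz)).reach).mono (by omega), ?_,
    fun a hai haj => ?_⟩
  · rw [mid_short, mid_short, coord_short_of_ne _ _ (by simp), Sum.swap_inr, Sum.swap_inr,
      hu (inl i) (by simp) (by simp), hu (inl j) (by simp) (by simp), hum]
    linear_combination z * hxy + hzs
  · rw [coord_short_of_ne _ _ haj, coord_short_of_ne _ _ hai, hu a hai haj]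

theorem reach_of_coord_eq_off_pair {i j : ι} (hij : i ≠ j) {s x y : R} {K : ℕ}
    (hK : ∀ z : R, s ^ (K + 1) * z = 0 → s ^ K * z = 0)
    (hxy : x * w.coord (inl i) + y * w.coord (inl j) = s) (hquad : v.quad = w.quad)
    (hmid : v.mid = w.mid) (hoff : ∀ a, a ≠ inr i → a ≠ inr j → v.coord a = w.coord a)
    (hcoord : ∀ a, v.coord a - w.coord a ∈ Ideal.span {s ^ (K + 1)}) : Reach ⊤ 1 v w := by
  obtain ⟨t, ht⟩ := Ideal.mem_span_singleton.1 (hcoord (inr i))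
  obtain ⟨t', ht'⟩ := Ideal.mem_span_singleton.1 (hcoord (inr j))
  have hi := hoff (inl i) (by simp) (by simp)
  have hj := hoff (inl j) (by simp) (by simp)
  have hsum (u : SplitVector ι R) : u.quad = u.mid ^ 2 + (u.coord (inl i) * u.coord (inr i) +
      u.coord (inl j) * u.coord (inr j) +
      ∑ k ∈ {i, j}ᶜ, u.coord (inl k) * u.coord (inr k)) := by
    rw [quad, ← Finset.sum_pair hij (f := fun k => u.coord (inl k) * u.coord (inr k)),
      Finset.sum_add_sum_compl]
  have hrest : ∑ k ∈ {i, j}ᶜ, v.coord (inl k) * v.coord (inr k) =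
      ∑ k ∈ {i, j}ᶜ, w.coord (inl k) * w.coord (inr k) := by
    refine Finset.sum_congr rfl fun k hk => ?_
    simp only [Finset.mem_compl, Finset.mem_insert, Finset.mem_singleton, not_or] at hk
    rw [hoff _ (by simp) (by simp), hoff (inr k) (by simpa using hk.1) (by simpa using hk.2)]
  have horth : s ^ K * (t * w.coord (inl i) + t' * w.coord (inl j)) = 0 := by
    refine hK _ ?_
    rw [hsum, hsum, hmid, hrest, hi, hj] at hquad
    linear_combination hquad - w.coord (inl i) * ht - w.coord (inl j) * ht'
  let ξ := x * (s ^ K * t') - y * (s ^ K * t)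
  have hw : v.long (inr i) (inl j) ξ = w := by
    ext a
    · by_cases hai : a = inr i
      · rw [hai, coord_long_left _ _ (by simpa), hj]
        linear_combination ht + x * horth - s ^ K * t * hxy
      by_cases haj : a = inr j
      · have hj' := coord_long_swap_right v ξ (a := inr i) (b := inl j) (by simpa)
        rw [Sum.swap_inl, Sum.swap_inr] at hj'
        rw [haj, hj', hi]
        linear_combination ht' + y * horth - s ^ K * t' * hxy
      · rw [coord_long_of_ne (b := inl j) _ _ hai haj, hoff a hai haj]
    · exact hmid
  exact hw ▸ (Step.long v (by simp) (by simpa) (Submodule.mem_top (x := ξ))).reach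

theorem reach_of_sub_mem {i j : ι} (hij : i ≠ j) {s x y : R} {K : ℕ}
    (hK : ∀ z : R, s ^ (K + 1) * z = 0 → s ^ K * z = 0)
    (hi : v.coord (inl i) = w.coord (inl i)) (hj : v.coord (inl j) = w.coord (inl j))
    (hxy : x * w.coord (inl i) + y * w.coord (inl j) = s) (hquad : v.quad = w.quad)
    (hcoord : ∀ a, w.coord a - v.coord a ∈ Ideal.span {s ^ (K + 2)})
    (hmid : w.mid - v.mid ∈ Ideal.span {s ^ (K + 2)}) :
    Reach ⊤ (4 * Fintype.card ι - 5) v w := by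
  set J := Ideal.span {s ^ (K + 1)}
  have hJ : Ideal.span {s ^ (K + 2)} = Ideal.span {s} * J := by
    rw [Ideal.span_singleton_mul_span_singleton, ← pow_succ']
  rw [hJ] at hmid
  simp only [hJ] at hcoord
  obtain ⟨u, hvu, hum, hu⟩ := exists_reach_coord_eq_off_pair hij hi hj hxy hcoord hmid
  have huv (a : ι ⊕ ι) : u.coord a - v.coord a ∈ J := by
    rw [← Ideal.Quotient.eq]
    exact congrArg (fun u : SplitVector ι (R ⧸ J) => u.coord a)
      (hvu.map_eq_map (f := Ideal.Quotient.mk J) J.mk_ker.ge)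
  have huw (a : ι ⊕ ι) : u.coord a - w.coord a ∈ J := by
    have hwv : w.coord a - v.coord a ∈ J := Ideal.mul_le_right (hcoord a)
    simpa using J.sub_mem (huv a) hwv
  have hι : 2 ≤ Fintype.card ι := (Finset.card_pair hij).ge.trans (Finset.card_le_univ _)
  have huw : Reach ⊤ 1 u w :=
    reach_of_coord_eq_off_pair hij hK hxy (hvu.quad_eq.trans hquad) hum hu huw
  exact ((hvu.ideal_mono le_top).trans huw).mono (by omega)

end Congruence

section Patching

open Sum (inl)
open Polynomial

variable {ι R : Type*} [DecidableEq ι] [Fintype ι] [CommRing R]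

theorem exists_reach_eval_add_pow_mul [IsNoetherianRing R] (v : SplitVector ι R[X]) {i j k : ι}
    (hij : i ≠ j) (hik : i ≠ k) (hjk : j ≠ k) {s : R} {x y : R[X]} (hquad : v.quad = 0)
    (hxy : x * v.coord (inl i) + y * v.coord (inl j) = C s) :
    ∃ m, ∀ t z : R, Reach ⊤ (4 * Fintype.card ι + 9) (v.map (evalRingHom t))
      (v.map (evalRingHom (t + s ^ m * z))) := by
  obtain ⟨K, hK⟩ := exists_forall_pow_mul_eq_zero_of_pow_succ_mul_eq_zero s
  refine ⟨2 * (K + 2) + 3, fun t z => ?_⟩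
  set t' := t + s ^ (2 * (K + 2) + 3) * z with ht'
  have heval (f : R[X]) : ∃ η, f.eval t' = f.eval t + s ^ (2 * (K + 2) + 3) * η := by
    obtain ⟨η, hη⟩ := sub_dvd_eval_sub t' t f
    exact ⟨z * η, by linear_combination hη + η * ht'⟩
  have heval_mem (f : R[X]) : f.eval t' - f.eval t ∈ Ideal.span {s ^ (K + 2)} := by
    obtain ⟨η, hη⟩ := heval f
    exact Ideal.mem_span_singleton.2 ⟨s ^ (K + 5) * η, by linear_combination hη⟩
  have hs (r : R) :
      x.eval r * (v.coord (inl i)).eval r + y.eval r * (v.coord (inl j)).eval r = s := by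
    simpa only [eval_add, eval_mul, eval_C] using congrArg (eval r) hxy
  obtain ⟨η, hη⟩ := heval (v.coord (inl i))
  obtain ⟨θ, hθ⟩ := heval (v.coord (inl j))
  obtain ⟨u, hvu, hi, hj⟩ := exists_reach_inl_pair_add_pow_mul (v.map (evalRingHom t)) hij hik hjk
    (hs t) (K + 2) η θ
  have hmod := hvu.map_eq_map (Ideal.mk_ker (I := Ideal.span {s ^ (K + 2)})).ge
  have hcoord (a : ι ⊕ ι) : (v.coord a).eval t' - u.coord a ∈ Ideal.span {s ^ (K + 2)} := by
    have hua := Ideal.Quotient.eq.1 (congrArg (fun u => u.coord a) hmod)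
    simpa using Ideal.sub_mem _ (heval_mem (v.coord a)) hua
  have hmid : v.mid.eval t' - u.mid ∈ Ideal.span {s ^ (K + 2)} := by
    have hum := Ideal.Quotient.eq.1 (congrArg SplitVector.mid hmod)
    simpa using Ideal.sub_mem _ (heval_mem v.mid) hum
  have huw := reach_of_sub_mem (w := v.map (evalRingHom t')) hij hK (hi.trans hη.symm)
    (hj.trans hθ.symm) (hs t') (by rw [hvu.quad_eq, quad_map, quad_map, hquad, map_zero, map_zero])
    hcoord hmid
  have hι : 2 ≤ Fintype.card ι := (Finset.card_pair hij).ge.trans (Finset.card_le_univ _)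
  exact ((hvu.ideal_mono le_top).trans huw).mono (by omega)

end Patching

end SplitVector

/-! ### Moving a coordinate off finitely many primes -/

namespace SplitVector

open Sum (inl inr swap)

variable {ι R : Type*} [DecidableEq ι] [CommRing R] {s : Set (Ideal R)} {I : Ideal R}

theorem exists_reach_coord_notMem_of_pair (hs : s.Finite) (hprime : ∀ Q ∈ s, Q.IsPrime)
    (hI : ∀ Q ∈ s, ¬ I ≤ Q) (v : SplitVector ι R) {a b : ι ⊕ ι} (hab : a ≠ b)
    (hab' : a ≠ swap b) :
    ∃ w, Reach I 2 v w ∧ (∀ c, c ≠ a → c ≠ b → c ≠ swap b → w.coord c = v.coord c) ∧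
      ∀ Q ∈ s, (v.coord a ∉ Q ∨ v.coord b ∉ Q ∨ v.coord (swap b) ∉ Q) → w.coord a ∉ Q := by
  classical
  obtain ⟨ξ, hξI, hξ⟩ := exists_forall_add_mul_notMem hs hprime hI
    (fun Q => if v.coord a ∉ Q ∨ v.coord (swap b) ∉ Q then v.coord a else v.coord b)
    (fun Q => if v.coord a ∉ Q ∨ v.coord (swap b) ∉ Q then v.coord (swap b)
      else -v.coord (swap a))
  set u := v.long a (swap b) ξ
  have hu_a : u.coord a = v.coord a + ξ * v.coord (swap b) := coord_long_left v ξ (by simpa)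
  have hu_b : u.coord b = v.coord b - ξ * v.coord (swap a) := by
    simpa only [Sum.swap_swap] using coord_long_swap_right v ξ (a := a) (b := swap b) (by simpa)
  have hu : ∀ Q ∈ s, (v.coord a ∉ Q ∨ v.coord b ∉ Q ∨ v.coord (swap b) ∉ Q) →
      u.coord a ∉ Q ∨ u.coord b ∉ Q := by
    intro Q hQ hv
    have hξQ := hξ Q hQ
    by_cases ha : v.coord a ∉ Q ∨ v.coord (swap b) ∉ Q
    · rw [if_pos ha, if_pos ha, ← hu_a] at hξQ
      exact .inl (hξQ ha)
    · rw [if_neg ha, if_neg ha, mul_neg, ← sub_eq_add_neg, ← hu_b] at hξQ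
      exact .inr (hξQ (by tauto))
  obtain ⟨η, hηI, hη⟩ := exists_forall_add_mul_notMem hs hprime hI
    (fun _ => u.coord a) (fun _ => u.coord b)
  refine ⟨u.long a b η, (Step.long v hab' (by simpa) hξI).reach.trans
    (Step.long u hab hab' hηI).reach, fun c hca hcb hcb' => ?_, fun Q hQ hv => ?_⟩
  · rw [coord_long_of_ne u η hca hcb', coord_long_of_ne v ξ hca (by simpa)]
  · rw [coord_long_left u η hab']
    exact hη Q hQ (hu Q hQ hv)

theorem exists_reach_coord_inl_notMem (hs : s.Finite) (hprime : ∀ Q ∈ s, Q.IsPrime)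
    (hI : ∀ Q ∈ s, ¬ I ≤ Q) {v : SplitVector ι R} {T : Finset ι} {j : ι} (hj : j ∉ T)
    (hv : ∀ Q ∈ s, v.coord (inl j) ∉ Q ∨ ∃ i ∈ T, v.coord (inl i) ∉ Q ∨ v.coord (inr i) ∉ Q) :
    ∃ w, Reach I (2 * T.card) v w ∧ (∀ i ∉ T, i ≠ j → w.coord (inl i) = v.coord (inl i)) ∧
      ∀ Q ∈ s, w.coord (inl j) ∉ Q := by
  obtain ⟨w, hvw, hw, hwQ⟩ := Reach.iterate (I := I) (k := 2) (v := v) T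
    (fun U u => (∀ i ∉ T, i ≠ j → u.coord (inl i) = v.coord (inl i)) ∧
      ∀ Q ∈ s, u.coord (inl j) ∉ Q ∨
        ∃ i ∈ T \ U, u.coord (inl i) ∉ Q ∨ u.coord (inr i) ∉ Q)
    (by
      rintro U k u hkT - - ⟨hu, huQ⟩
      have hjk : j ≠ k := (ne_of_mem_of_not_mem hkT hj).symm
      obtain ⟨w, huw, hw, hwQ⟩ := exists_reach_coord_notMem_of_pair hs hprime hI u
        (a := inl j) (b := inl k) (by simpa) (by simp)
      refine ⟨w, huw, fun i hi hij => ?_, fun Q hQ => ?_⟩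
      · have hik : i ≠ k := (ne_of_mem_of_not_mem hkT hi).symm
        rw [hw _ (by simpa) (by simpa) (by simp), hu i hi hij]
      obtain h | ⟨i, hi, h⟩ := huQ Q hQ
      · exact .inl (hwQ Q hQ (.inl h))
      obtain rfl | hik := eq_or_ne i k
      · exact .inl (hwQ Q hQ (.inr h))
      obtain ⟨hiT, hiU⟩ := Finset.mem_sdiff.1 hi
      have hij : i ≠ j := ne_of_mem_of_not_mem hiT hj
      refine .inr ⟨i, by simp [hiT, hiU, hik], ?_⟩
      rwa [hw _ (by simpa) (by simpa) (by simp), hw _ (by simp) (by simp) (by simpa)])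
    ⟨fun _ _ _ => rfl, by simpa only [Finset.sdiff_empty] using hv⟩
  exact ⟨w, hvw, hw, fun Q hQ => by simpa using hwQ Q hQ⟩

/-- This puts the information carried by `v_{-j}` into a position from which
`exists_reach_coord_inl_notMem` can transport it to `v_j`. -/
theorem exists_long_coord_notMem (hs : s.Finite) (hprime : ∀ Q ∈ s, Q.IsPrime)
    (hI : ∀ Q ∈ s, ¬ I ≤ Q) {v : SplitVector ι R} {i₀ j k : ι} (hjk : j ≠ k) (hk : k ≠ i₀)
    (hv : ∀ Q ∈ s, ∃ i ≠ i₀, v.coord (inl i) ∉ Q ∨ v.coord (inr i) ∉ Q) :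
    ∃ ξ ∈ I, ∀ Q ∈ s, (v.long (inl k) (inr j) ξ).coord (inl j) ∉ Q ∨ ∃ i, (i ≠ j ∧ i ≠ i₀) ∧
      ((v.long (inl k) (inr j) ξ).coord (inl i) ∉ Q ∨
        (v.long (inl k) (inr j) ξ).coord (inr i) ∉ Q) := by
  obtain ⟨ξ, hξI, hξ⟩ := exists_forall_add_mul_notMem hs hprime hI
    (fun _ => v.coord (inl k)) (fun _ => v.coord (inr j))
  refine ⟨ξ, hξI, fun Q hQ => ?_⟩
  set u := v.long (inl k) (inr j) ξ
  have hu_k : u.coord (inl k) = v.coord (inl k) + ξ * v.coord (inr j) :=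
    coord_long_left v ξ (by simpa using hjk.symm)
  have hu_j : u.coord (inl j) = v.coord (inl j) - ξ * v.coord (inr k) := by
    have := coord_long_swap_right v ξ (a := inl k) (b := inr j) (by simpa using hjk.symm)
    rwa [Sum.swap_inl] at this
  have hu_inr : ∀ i, u.coord (inr i) = v.coord (inr i) :=
    fun i => coord_long_of_ne v ξ (by simp) (by simp)
  by_contra! hu
  obtain ⟨huj, hu⟩ := hu
  have hkQ : v.coord (inl k) ∈ Q ∧ v.coord (inr j) ∈ Q := by
    by_contra h
    exact hξ Q hQ (not_and_or.1 h) (hu_k ▸ (hu k ⟨hjk.symm, hk⟩).1)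
  obtain ⟨i, hi, h⟩ := hv Q hQ
  refine not_and_or.2 h ?_
  obtain rfl | hij := eq_or_ne i j
  · have hinr := (hu k ⟨hjk.symm, hk⟩).2
    rw [hu_inr] at hinr
    rw [hu_j] at huj
    exact ⟨(Q.sub_mem_iff_left (Q.mul_mem_left ξ hinr)).1 huj, hkQ.2⟩
  obtain ⟨hinl, hinr⟩ := hu i ⟨hij, hi⟩
  refine ⟨?_, hu_inr i ▸ hinr⟩
  obtain rfl | hik := eq_or_ne i k
  · exact hkQ.1
  · rwa [coord_long_of_ne v ξ (by simpa) (by simpa)] at hinl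

variable [Fintype ι]

theorem exists_reach_coord_inl_notMem_of_ne (hs : s.Finite) (hprime : ∀ Q ∈ s, Q.IsPrime)
    (hI : ∀ Q ∈ s, ¬ I ≤ Q) {v : SplitVector ι R} {i₀ j k : ι} (hj : j ≠ i₀) (hk : k ≠ i₀)
    (hjk : j ≠ k) (hv : ∀ Q ∈ s, ∃ i ≠ i₀, v.coord (inl i) ∉ Q ∨ v.coord (inr i) ∉ Q) :
    ∃ w, Reach I (2 * Fintype.card ι - 3) v w ∧ w.coord (inl i₀) = v.coord (inl i₀) ∧
      ∀ Q ∈ s, w.coord (inl j) ∉ Q := by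
  obtain ⟨ξ, hξI, hξ⟩ := exists_long_coord_notMem hs hprime hI hjk hk hv
  obtain ⟨w, huw, hw, hwQ⟩ := exists_reach_coord_inl_notMem hs hprime hI
    (T := {j, i₀}ᶜ) (j := j) (by simp) (by simpa using hξ)
  have hcard : (2 : ℕ) ≤ Fintype.card ι := by
    simpa only [Finset.card_pair hj] using Finset.card_le_univ {j, i₀}
  refine ⟨w, ((Step.long v (by simp) (by simpa using hjk.symm) hξI).reach.trans huw).mono ?_, ?_,
    hwQ⟩
  · rw [Finset.card_compl, Finset.card_pair hj]
    omega
  · rw [hw i₀ (by simp) hj.symm,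
      coord_long_of_ne v ξ (by simpa using hk.symm) (by simpa using hj.symm)]

end SplitVector

section PrimesOverContaining

open Polynomial

variable {R : Type*} [CommRing R] {s : Set (Ideal R)} {f g : R[X]}

/-- The primes of `R[X]` that contain `f` and contract to a member of `s`. -/
def primesOverContaining (s : Set (Ideal R)) (f : R[X]) : Set (Ideal R[X]) :=
  {Q | Q.IsPrime ∧ f ∈ Q ∧ Q.comap (C : R →+* R[X]) ∈ s}

theorem isPrime_of_mem_primesOverContaining {Q : Ideal R[X]} (hQ : Q ∈ primesOverContaining s f) :
    Q.IsPrime :=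
  hQ.1

theorem finite_primesOverContaining (hs : s.Finite) (hf : f.Monic) :
    (primesOverContaining s f).Finite := by
  have := hf.finite_quotient
  refine (hs.biUnion fun P _ => (Algebra.QuasiFinite.finite_primesOver
    (S := R[X] ⧸ Ideal.span {f}) P).image (Ideal.comap (Ideal.Quotient.mk _))).subset ?_
  rintro Q ⟨hQ, hfQ, hQs⟩
  have hfQ : Ideal.span {f} ≤ Q := (Ideal.span_singleton_le_iff_mem Q).2 hfQ
  have hcomap : (Q.map (Ideal.Quotient.mk (Ideal.span {f}))).comap (Ideal.Quotient.mk _) = Q := by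
    rw [Ideal.comap_map_of_surjective' _ Ideal.Quotient.mk_surjective, Ideal.mk_ker,
      sup_eq_left.2 hfQ]
  refine Set.mem_biUnion hQs ⟨_, ⟨Ideal.map_isPrime_of_surjective Ideal.Quotient.mk_surjective
    (by rwa [Ideal.mk_ker]), ⟨?_⟩⟩, hcomap⟩
  rw [Ideal.under_def, ← Polynomial.algebraMap_eq,
    IsScalarTower.algebraMap_eq R R[X] (R[X] ⧸ Ideal.span {f}), ← Ideal.comap_comap]
  exact congrArg _ hcomap.symm

theorem exists_mul_add_mul_eq_C (hs : s.Finite) (hprime : ∀ P ∈ s, P.IsPrime) (hf : f.Monic)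
    (hg : ∀ Q ∈ primesOverContaining s f, g ∉ Q) :
    ∃ r : R, (∀ P ∈ s, r ∉ P) ∧ ∃ x y, x * f + y * g = C r := by
  have := hf.finite_quotient
  set π := Ideal.Quotient.mk (Ideal.span {f})
  have hcontract : ∀ P ∈ s, ¬ (Ideal.span {f, g}).comap (C : R →+* R[X]) ≤ P := by
    intro P hP hle
    have := hprime P hP
    have hπ : ((Ideal.span {f, g}).map π).comap (algebraMap R (R[X] ⧸ Ideal.span {f})) ≤ P := by
      refine le_trans (le_of_eq ?_) hle
      rw [IsScalarTower.algebraMap_eq R R[X], ← Ideal.comap_comap, Ideal.Quotient.algebraMap_eq,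
        Ideal.comap_map_of_surjective' _ Ideal.Quotient.mk_surjective, Ideal.mk_ker,
        sup_eq_left.2 (Ideal.span_mono (by simp)), Polynomial.algebraMap_eq]
    obtain ⟨Q, hQ, hQprime, hQP⟩ := Ideal.exists_ideal_over_prime_of_isIntegral P _ hπ
    have hmem : ∀ h ∈ ({f, g} : Set R[X]), h ∈ Q.comap π :=
      fun h hh => hQ (Ideal.mem_map_of_mem π (Ideal.subset_span hh))
    refine hg (Q.comap π) ⟨Ideal.comap_isPrime π Q, hmem f (by simp), ?_⟩ (hmem g (by simp))
    rwa [Ideal.comap_comap, show (Q.comap (π.comp C)) = P from hQP]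
  obtain ⟨r, hr, hrs⟩ := exists_forall_add_mul_notMem hs hprime hcontract (fun _ => 0) fun _ => 1
  refine ⟨r, fun P hP => ?_, Ideal.mem_span_pair.1 hr⟩
  simpa using hrs P hP (.inr ((Ideal.ne_top_iff_one P).1 (hprime P hP).ne_top))

theorem not_span_X_sub_one_le_of_mem_primesOverContaining (hf : f.eval 1 = 1) {Q : Ideal R[X]}
    (hQ : Q ∈ primesOverContaining s f) : ¬ Ideal.span {X - 1} ≤ Q := by
  intro hle
  have hdvd : X - 1 ∣ f - 1 := by simpa [hf] using X_sub_C_dvd_sub_C_eval (a := 1) (p := f)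
  refine hQ.1.ne_top ((Ideal.eq_top_iff_one Q).2 ?_)
  exact (Q.sub_mem_iff_right hQ.2.1).1 (hle (Ideal.mem_span_singleton.2 hdvd))

theorem monic_add_X_sub_one_mul_X_pow_mul (f : R[X]) (hg : g.Monic) :
    (f + (X - 1) * (X ^ f.natDegree * g)).Monic := by
  nontriviality R
  have hX : (X - 1 : R[X]).Monic := monic_X_sub_C 1
  have hXg := (monic_X_pow f.natDegree).mul hg
  refine (hX.mul hXg).add_of_right (degree_lt_degree ?_)
  rw [hX.natDegree_mul hXg, (monic_X_pow _).natDegree_mul hg, natDegree_X_pow,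
    show (X - 1 : R[X]).natDegree = 1 from natDegree_X_sub_C 1]
  omega

end PrimesOverContaining

/-! ### The path from 0 to 1 -/

namespace SplitVector

open Sum (inl inr swap)
open Polynomial

theorem eval_coord_eq_of_map_eq {ι R : Type*} [CommRing R] {v w : SplitVector ι R[X]} {t : R}
    (h : w.map (evalRingHom t) = v.map (evalRingHom t)) (a : ι ⊕ ι) :
    (w.coord a).eval t = (v.coord a).eval t :=
  congrArg (fun u => u.coord a) h

variable {ι R : Type*} [DecidableEq ι] [CommRing R] {s : Set (Ideal R)} {v : SplitVector ι R[X]}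
  {i₀ j k : ι}

theorem exists_reach_coord_inr_monic (v : SplitVector ι R[X]) (hj : j ≠ i₀)
    (hmonic : (v.coord (inl i₀)).Monic) :
    ∃ w, Reach (Ideal.span {X - 1}) 1 v w ∧ (w.coord (inr j)).Monic ∧
      w.coord (inl i₀) = v.coord (inl i₀) := by
  refine ⟨v.long (inr j) (inl i₀) ((X - 1) * X ^ (v.coord (inr j)).natDegree),
    (Step.long v (by simp) (by simpa)
      (Ideal.mul_mem_right _ _ (Ideal.mem_span_singleton_self _))).reach, ?_,
    coord_long_of_ne v _ (by simp) (by simp)⟩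
  rw [coord_long_left v _ (by simpa), mul_assoc]
  exact monic_add_X_sub_one_mul_X_pow_mul _ hmonic

theorem coord_mem_of_forall_coord_long_mem {Q : Ideal R} {v : SplitVector ι R} {η : R}
    (hj : j ≠ i₀) (hi₀ : (v.long (inl j) (inr i₀) η).coord (inl i₀) ∈ Q)
    (hQ : ∀ i ≠ i₀, (v.long (inl j) (inr i₀) η).coord (inl i) ∈ Q ∧
      (v.long (inl j) (inr i₀) η).coord (inr i) ∈ Q)
    {a : ι ⊕ ι} (ha : a ≠ inl j) (ha' : a ≠ inr i₀) : v.coord a ∈ Q := by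
  have hinr : ∀ i, (v.long (inl j) (inr i₀) η).coord (inr i) = v.coord (inr i) :=
    fun i => coord_long_of_ne v η (by simp) (by simp)
  obtain i | i := a
  · obtain rfl | hi := eq_or_ne i i₀
    · have := coord_long_swap_right v η (a := inl j) (b := inr i) (by simpa)
      rw [Sum.swap_inl, Sum.swap_inr] at this
      rw [this, Q.sub_mem_iff_left (Q.mul_mem_left η (hinr j ▸ (hQ j hj).2))] at hi₀
      exact hi₀
    · rw [← coord_long_of_ne v η (b := inr i₀) ha (by simpa)]
      exact (hQ i hi).1
  · exact hinr i ▸ (hQ i (by simpa using ha')).2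

theorem exists_reach_forall_primesOverContaining [Fintype ι] (hs : s.Finite) (hj : j ≠ i₀)
    (hv : v.IsotropicUnimodular) (hmonic : (v.coord (inl i₀)).Monic)
    (heval : (v.coord (inl i₀)).eval 1 = 1) (hinr : (v.coord (inr j)).Monic) :
    ∃ w, Reach (Ideal.span {X - 1}) 1 v w ∧ (w.coord (inl i₀)).Monic ∧
      ∀ Q ∈ primesOverContaining s (w.coord (inl i₀)), ∃ i ≠ i₀,
        w.coord (inl i) ∉ Q ∨ w.coord (inr i) ∉ Q := by
  obtain ⟨ξ, hξI, hξ⟩ := exists_forall_add_mul_notMem (finite_primesOverContaining hs hmonic)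
    (fun Q => isPrime_of_mem_primesOverContaining)
    (fun Q => not_span_X_sub_one_le_of_mem_primesOverContaining heval)
    (fun _ => v.coord (inl j)) (fun _ => v.coord (inr i₀))
  -- The second summand makes the new coordinate at `i₀` monic and vanishes at the relevant primes.
  set d := (v.coord (inl i₀) - ξ * v.coord (inr j)).natDegree
  set η := ξ - (X - 1) * (X ^ d * v.coord (inl i₀))
  have hw_j : (v.long (inl j) (inr i₀) η).coord (inl j) = v.coord (inl j) + η * v.coord (inr i₀) :=
    coord_long_left v η (by simpa)
  have hw_i₀ : (v.long (inl j) (inr i₀) η).coord (inl i₀) =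
      v.coord (inl i₀) - η * v.coord (inr j) := by
    have := coord_long_swap_right v η (a := inl j) (b := inr i₀) (by simpa)
    rwa [Sum.swap_inl] at this
  refine ⟨v.long (inl j) (inr i₀) η, (Step.long v (by simp) (by simpa) (Ideal.sub_mem _ hξI
    (Ideal.mul_mem_right _ _ (Ideal.mem_span_singleton_self _)))).reach, ?_, ?_⟩
  · convert monic_add_X_sub_one_mul_X_pow_mul (v.coord (inl i₀) - ξ * v.coord (inr j))
      (hmonic.mul hinr) using 1
    rw [hw_i₀]
    ring
  rintro Q ⟨hQ, hi₀Q, hQs⟩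
  by_contra! hall
  have hvQ {a : ι ⊕ ι} : a ≠ inl j → a ≠ inr i₀ → v.coord a ∈ Q :=
    coord_mem_of_forall_coord_long_mem hj hi₀Q hall
  have hi₀ : v.coord (inl i₀) ∈ Q := hvQ (by simpa using hj.symm) (by simp)
  obtain ⟨hjQ, hi₀'Q⟩ : v.coord (inl j) ∈ Q ∧ v.coord (inr i₀) ∈ Q := by
    by_contra h
    refine hξ Q ⟨hQ, hi₀, hQs⟩ (not_and_or.1 h) ?_
    convert Q.add_mem (hw_j ▸ (hall j hj).1)
      (Q.mul_mem_left ((X - 1) * X ^ d * v.coord (inr i₀)) hi₀) using 1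
    ring
  obtain ⟨a, ha⟩ := hv.exists_coord_notMem Q hQ
  exact ha (hvQ (fun h => ha (h ▸ hjQ)) fun h => ha (h ▸ hi₀'Q))

theorem Reach.map_eval_one {w : SplitVector ι R[X]} {N : ℕ}
    (h : Reach (Ideal.span {X - 1}) N v w) :
    w.map (evalRingHom 1) = v.map (evalRingHom 1) :=
  h.map_eq_map ((Ideal.span_singleton_le_iff_mem _).2 (by simp [RingHom.mem_ker]))

variable [Fintype ι]

theorem exists_reach_mul_add_mul_eq_C (hs : s.Finite) (hprime : ∀ P ∈ s, P.IsPrime)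
    (hj : j ≠ i₀) (hk : k ≠ i₀) (hjk : j ≠ k) (hv : v.IsotropicUnimodular)
    (hmonic : (v.coord (inl i₀)).Monic) (heval : (v.coord (inl i₀)).eval 1 = 1) :
    ∃ w, Reach (Ideal.span {X - 1}) (2 * Fintype.card ι - 1) v w ∧ (w.coord (inl i₀)).Monic ∧
      ∃ r : R, (∀ P ∈ s, r ∉ P) ∧
        ∃ x y, x * w.coord (inl i₀) + y * w.coord (inl j) = C r := by
  obtain ⟨u₁, hvu₁, hinr₁, hi₀⟩ := exists_reach_coord_inr_monic v hj hmonic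
  obtain ⟨u₂, hu₁u₂, hmonic₂, hQ⟩ := exists_reach_forall_primesOverContaining hs hj
    (hvu₁.isotropicUnimodular hv) (hi₀ ▸ hmonic) (hi₀ ▸ heval) hinr₁
  have hvu₂ := hvu₁.trans hu₁u₂
  have heval₂ := (eval_coord_eq_of_map_eq hvu₂.map_eval_one _).trans heval
  obtain ⟨w, hu₂w, hwi₀, hwj⟩ := exists_reach_coord_inl_notMem_of_ne
    (finite_primesOverContaining hs hmonic₂) (fun Q => isPrime_of_mem_primesOverContaining)
    (fun Q => not_span_X_sub_one_le_of_mem_primesOverContaining heval₂) hj hk hjk hQ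
  have hcard : 2 ≤ Fintype.card ι := by
    simpa only [Finset.card_pair hj] using Finset.card_le_univ {j, i₀}
  rw [← hwi₀] at hmonic₂ hwj
  exact ⟨w, (hvu₂.trans hu₂w).mono (by omega), hmonic₂,
    exists_mul_add_mul_eq_C hs hprime hmonic₂ hwj⟩

/-- Each round costs `2 * card ι - 1` for `exists_reach_mul_add_mul_eq_C` and `4 * card ι + 9` for
`exists_reach_eval_add_pow_mul`. -/
theorem exists_ideal_forall_reach_map_eval_add [IsNoetherianRing R] (hj : j ≠ i₀) (hk : k ≠ i₀)
    (hjk : j ≠ k) (hv : v.IsotropicUnimodular) (hmonic : (v.coord (inl i₀)).Monic)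
    (heval : (v.coord (inl i₀)).eval 1 = 1) (h : ℕ) :
    ∃ (I : Ideal R) (w : SplitVector ι R[X]),
      (∀ P : Ideal R, P.IsPrime → I ≤ P → PrimeChain ⊥ h P) ∧ w.IsotropicUnimodular ∧
      (w.coord (inl i₀)).Monic ∧ w.map (evalRingHom 1) = v.map (evalRingHom 1) ∧
      ∀ t, ∀ z ∈ I, Reach ⊤ (h * (6 * Fintype.card ι + 8)) (v.map (evalRingHom t))
        (w.map (evalRingHom (t + z))) := by
  induction h with
  | zero =>
    refine ⟨⊥, v, fun P hP _ => .zero hP bot_le, hv, hmonic, rfl, fun t z hz => ?_⟩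
    rw [Ideal.mem_bot.1 hz, add_zero]
    exact .refl _ _
  | succ h ih =>
    obtain ⟨I, u, hI, hu, hmonic_u, hvu, hreach⟩ := ih
    obtain ⟨w, huw, hmonic_w, r, hr, x, y, hxy⟩ := exists_reach_mul_add_mul_eq_C
      (Ideal.finite_minimalPrimes_of_isNoetherianRing R I) (fun P hP => hP.1.1) hj hk hjk hu
      hmonic_u ((eval_coord_eq_of_map_eq hvu _).trans heval)
    obtain ⟨m, hm⟩ := exists_reach_eval_add_pow_mul w hj.symm hk.symm hjk
      (huw.isotropicUnimodular hu).quad_eq_zero hxy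
    refine ⟨I ⊔ Ideal.span {r ^ m}, w, fun P hP hle => ?_, huw.isotropicUnimodular hu, hmonic_w,
      huw.map_eval_one.trans hvu, fun t z hz => ?_⟩
    · obtain ⟨Q, hQ, hQP⟩ := Ideal.exists_minimalPrimes_le (le_sup_left.trans hle)
      refine .succ hP (hI Q hQ.1.1 hQ.1.2) (lt_of_le_of_ne hQP ?_)
      rintro rfl
      exact hr Q hQ (hP.mem_of_pow_mem m
        (hle (Ideal.mem_sup_right (Ideal.mem_span_singleton_self _))))
    · obtain ⟨z₁, hz₁, z₂, hz₂, rfl⟩ := Submodule.mem_sup.1 hz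
      obtain ⟨c, rfl⟩ := Ideal.mem_span_singleton.1 hz₂
      rw [← add_assoc]
      refine (((hreach t z₁ hz₁).trans (huw.map_top _)).trans (hm (t + z₁) c)).mono ?_
      have := Fintype.card_pos_iff.2 ⟨i₀⟩
      rw [add_one_mul]
      omega

theorem reach_map_eval_zero_map_eval_one [IsNoetherianRing R] {h : ℕ} (hdim : ringKrullDim R < h)
    (hj : j ≠ i₀) (hk : k ≠ i₀) (hjk : j ≠ k) (hv : v.IsotropicUnimodular)
    (hmonic : (v.coord (inl i₀)).Monic) (heval : (v.coord (inl i₀)).eval 1 = 1) :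
    Reach ⊤ (h * (6 * Fintype.card ι + 8)) (v.map (evalRingHom 0)) (v.map (evalRingHom 1)) := by
  obtain ⟨I, w, hI, -, -, hmap, hreach⟩ :=
    exists_ideal_forall_reach_map_eval_add hj hk hjk hv hmonic heval h
  have htop := eq_top_of_le_height_of_ringKrullDim_lt hdim fun P hP hIP => (hI P hP hIP).le_height
  simpa only [zero_add, hmap] using hreach 0 1 (htop ▸ Submodule.mem_top)

end SplitVector

/-! ### Contraction to the origin -/

theorem constantCoeff_surjective {σ R : Type*} [CommRing R] :
    Function.Surjective (MvPolynomial.constantCoeff (R := R) (σ := σ)) :=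
  fun c => ⟨MvPolynomial.C c, MvPolynomial.constantCoeff_C _ c⟩

theorem map_constantCoeff_eq_top {σ R : Type*} [CommRing R] {h : ℕ}
    (hdim : ringKrullDim R < h) {I : Ideal (MvPolynomial σ R)}
    (hI : ∀ P : Ideal (MvPolynomial σ R), P.IsPrime → I ≤ P →
      RingHom.ker (MvPolynomial.constantCoeff (R := R) (σ := σ)) ≤ P →
      PrimeChain (RingHom.ker (MvPolynomial.constantCoeff (R := R) (σ := σ))) h P) :
    I.map MvPolynomial.constantCoeff = ⊤ := by
  have hsurj := constantCoeff_surjective (σ := σ) (R := R)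
  refine eq_top_of_le_height_of_ringKrullDim_lt hdim fun P hP hle => ?_
  have hchain := (hI (P.comap MvPolynomial.constantCoeff) (Ideal.comap_isPrime _ _)
    (Ideal.map_le_iff_le_comap.1 hle) (Ideal.comap_mono bot_le)).map_of_surjective hsurj
  rw [Ideal.map_comap_of_surjective _ hsurj] at hchain
  exact hchain.le_height

section Contraction

open Polynomial

variable {R : Type*} [CommRing R] {n : ℕ} {w : Fin n → ℕ}

/-- A family of endomorphisms of `R[x_1,…,x_n]`, given by polynomials in an additional variable `T`,
that joins the identity at `T = 0` to evaluation at the origin at `T = 1`. The exponents `w i` are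
there to make the image of `x_i` monic in `T` of a prescribed degree. -/
noncomputable def contraction (w : Fin n → ℕ) :
    MvPolynomial (Fin n) R →ₐ[R] (MvPolynomial (Fin n) R)[X] :=
  MvPolynomial.aeval fun i => C (MvPolynomial.X i) * (1 - X) + X ^ (w i - 1) * (X - 1)

theorem contraction_X (w : Fin n → ℕ) (i : Fin n) :
    contraction w (MvPolynomial.X i : MvPolynomial (Fin n) R) =
      C (MvPolynomial.X i) * (1 - X) + X ^ (w i - 1) * (X - 1) :=
  MvPolynomial.aeval_X _ i

theorem evalRingHom_zero_comp_contraction (hw : ∀ i, 2 ≤ w i) :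
    (evalRingHom 0).comp (contraction w).toRingHom = RingHom.id (MvPolynomial (Fin n) R) := by
  refine MvPolynomial.ringHom_ext (fun c => by simp) fun i => ?_
  have : w i - 1 ≠ 0 := by have := hw i; omega
  simp [contraction_X, this]

theorem evalRingHom_one_comp_contraction (w : Fin n → ℕ) :
    (evalRingHom 1).comp (contraction w).toRingHom =
      (MvPolynomial.C (σ := Fin n) (R := R)).comp MvPolynomial.constantCoeff :=
  MvPolynomial.ringHom_ext (fun c => by simp) fun i => by simp [contraction_X]

theorem monic_contraction_X [Nontrivial R] {i : Fin n} (hw : 2 ≤ w i) :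
    (contraction w (MvPolynomial.X i : MvPolynomial (Fin n) R)).Monic ∧
      (contraction w (MvPolynomial.X i : MvPolynomial (Fin n) R)).natDegree = w i := by
  have hX : (X - 1 : (MvPolynomial (Fin n) R)[X]).Monic := monic_X_sub_C 1
  have hXdeg : (X - 1 : (MvPolynomial (Fin n) R)[X]).natDegree = 1 := natDegree_X_sub_C 1
  have hmonic := (monic_X_pow (R := MvPolynomial (Fin n) R) (w i - 1)).mul hX
  have hdeg : (X ^ (w i - 1) * (X - 1) : (MvPolynomial (Fin n) R)[X]).natDegree = w i := by
    rw [(monic_X_pow _).natDegree_mul hX, natDegree_X_pow, hXdeg]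
    omega
  have hlt : (C (MvPolynomial.X i) * (1 - X) : (MvPolynomial (Fin n) R)[X]).natDegree <
      (X ^ (w i - 1) * (X - 1) : (MvPolynomial (Fin n) R)[X]).natDegree := by
    refine (natDegree_C_mul_le _ _).trans_lt ?_
    rw [← neg_sub, natDegree_neg, hXdeg, hdeg]
    omega
  rw [contraction_X]
  exact ⟨hmonic.add_of_right (degree_lt_degree hlt),
    (natDegree_add_eq_right_of_natDegree_lt hlt).trans hdeg⟩

/-- The correction is `z + x_0^{M+1} f`, with `z` adjusting the constant term, `f` supplied by
`exists_mem_forall_aeval_monic`, and `M` so large that `x_0^{M+1} f` dominates after contraction. -/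
theorem exists_mem_contraction_add_monic [IsNoetherianRing R] {h : ℕ} (hdim : ringKrullDim R < h)
    {I : Ideal (MvPolynomial (Fin (n + 1)) R)}
    (hI : ∀ P : Ideal (MvPolynomial (Fin (n + 1)) R), P.IsPrime → I ≤ P → (h : ℕ∞) ≤ P.height)
    (hconst : I.map MvPolynomial.constantCoeff = ⊤) (p : MvPolynomial (Fin (n + 1)) R) :
    ∃ y ∈ I, MvPolynomial.constantCoeff (p + y) = 1 ∧
      ∃ w : Fin (n + 1) → ℕ, (∀ i, 2 ≤ w i) ∧ (contraction w (p + y)).Monic := by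
  cases subsingleton_or_nontrivial R
  · exact ⟨0, I.zero_mem, Subsingleton.elim _ _, fun _ => 2, fun _ => le_rfl,
      monic_of_subsingleton _⟩
  obtain ⟨z, hz, hconst_z⟩ := (Ideal.mem_map_iff_of_surjective _
    (constantCoeff_surjective (σ := Fin (n + 1)) (R := R))).1
    (hconst ▸ Submodule.mem_top (x := 1 - MvPolynomial.constantCoeff p))
  obtain ⟨f, hf, w, hw, hmonic⟩ := exists_mem_forall_aeval_monic
    (S := MvPolynomial (Fin (n + 1)) R) hdim 2 I hI
  have hX i := monic_contraction_X (R := R) (hw i)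
  simp only [contraction_X] at hX
  obtain ⟨M, hM⟩ := exists_natDegree_aeval_le (S := MvPolynomial (Fin (n + 1)) R) w (p + z)
  refine ⟨z + MvPolynomial.X 0 ^ (M + 1) * f, I.add_mem hz (I.mul_mem_left _ hf),
    by simp [hconst_z], w, hw, ?_⟩
  have hXpow := (hX 0).1.pow (M + 1)
  have hmonic : (contraction w f).Monic := hmonic _ hX
  have hle : (contraction w (p + z)).natDegree ≤ M := hM _ fun i => (hX i).2.le
  rw [← add_assoc, map_add, map_mul, map_pow, contraction_X]
  refine (hXpow.mul hmonic).add_of_right (degree_lt_degree (hle.trans_lt ?_))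
  rw [hXpow.natDegree_mul hmonic, (hX 0).1.natDegree_pow, (hX 0).2]
  have := Nat.mul_le_mul_left (M + 1) (hw 0)
  omega

end Contraction

namespace SplitVector

open Sum (inl)
open Polynomial

variable {ι R : Type*} [DecidableEq ι] [Fintype ι] [CommRing R] [IsNoetherianRing R] {i₀ j k : ι}

theorem IsotropicUnimodular.reach_std_of_ringKrullDim_lt {v : SplitVector ι R}
    (hv : v.IsotropicUnimodular) (hdim : ringKrullDim R < (Fintype.card ι - 1 : ℕ)) (i₀ : ι) :
    Reach ⊤ (Fintype.card ι * (Fintype.card ι - 1) / 2 + 4 * Fintype.card ι) v (std i₀) := by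
  obtain ⟨u, hvu, hu⟩ := hv.exists_reach_primeChain (Set.finite_singleton ⊥) i₀
  have htop : Ideal.span ((fun i => u.coord (inl i)) '' {i₀}ᶜ) = ⊤ :=
    eq_top_of_le_height_of_ringKrullDim_lt hdim fun P hP hle =>
      (hu ⊥ rfl P hP bot_le fun i hi => hle (Ideal.subset_span ⟨i, hi, rfl⟩)).le_height
  obtain ⟨w, huw, hw⟩ :=
    exists_reach_coord_add u (htop ▸ Submodule.mem_top (x := 1 - u.coord (inl i₀)))
  have hvw := hvu.trans huw
  rw [add_sub_cancel] at hw
  exact (hvw.trans (reach_std (hvw.isotropicUnimodular hv).quad_eq_zero hw)).mono (by omega)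

theorem IsotropicUnimodular.exists_reach_contraction_monic {n : ℕ}
    {v : SplitVector ι (MvPolynomial (Fin (n + 1)) R)} (hv : v.IsotropicUnimodular)
    (hdim : ringKrullDim R < (Fintype.card ι - 1 : ℕ)) (i₀ : ι) :
    ∃ u, Reach ⊤ (Fintype.card ι * (Fintype.card ι - 1) / 2 + 2 * (Fintype.card ι - 1)) v u ∧
      MvPolynomial.constantCoeff (u.coord (inl i₀)) = 1 ∧
      ∃ w : Fin (n + 1) → ℕ, (∀ i, 2 ≤ w i) ∧ (contraction w (u.coord (inl i₀))).Monic := by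
  obtain ⟨u, hvu, hu⟩ := hv.exists_reach_primeChain
    (F := {⊥, RingHom.ker (MvPolynomial.constantCoeff (R := R) (σ := Fin (n + 1)))}) (by simp) i₀
  have hmem : ∀ {P : Ideal (MvPolynomial (Fin (n + 1)) R)},
      Ideal.span ((fun i => u.coord (inl i)) '' {i₀}ᶜ) ≤ P → ∀ i ≠ i₀, u.coord (inl i) ∈ P :=
    fun hle i hi => hle (Ideal.subset_span ⟨i, hi, rfl⟩)
  obtain ⟨y, hy, hconst, w, hw, hmonic⟩ := exists_mem_contraction_add_monic hdim
    (fun P hP hle => (hu ⊥ (by simp) P hP bot_le (hmem hle)).le_height)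
    (map_constantCoeff_eq_top hdim fun P hP hle hker =>
      hu _ (by simp) P hP hker (hmem hle)) (u.coord (inl i₀))
  obtain ⟨u', huu', hu'⟩ := exists_reach_coord_add u hy
  rw [← hu'] at hconst hmonic
  exact ⟨u', (hvu.trans huu').mono (by omega), hconst, w, hw, hmonic⟩

theorem IsotropicUnimodular.reach_std_of_mvPolynomial {n D : ℕ}
    {v : SplitVector ι (MvPolynomial (Fin (n + 1)) R)} (hv : v.IsotropicUnimodular)
    (hdim : ringKrullDim R ≤ D) (hD : D + 2 ≤ Fintype.card ι) (hj : j ≠ i₀) (hk : k ≠ i₀)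
    (hjk : j ≠ k) :
    Reach ⊤ (Fintype.card ι * (Fintype.card ι - 1) / 2 + 4 * Fintype.card ι +
      (D + n + 2) * (6 * Fintype.card ι + 8)) v (std i₀) := by
  obtain ⟨u, hvu, hconst, w, hw, hmonic⟩ := hv.exists_reach_contraction_monic
    (hdim.trans_lt (Nat.cast_lt.2 (by omega : D < Fintype.card ι - 1))) i₀
  have hu := hvu.isotropicUnimodular hv
  have hdim' : ringKrullDim (MvPolynomial (Fin (n + 1)) R) < (D + n + 2 : ℕ) := by
    rw [MvPolynomial.ringKrullDim_of_isNoetherianRing, Nat.card_fin]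
    calc ringKrullDim R + (n + 1 : ℕ) ≤ (D + (n + 1) : ℕ) := by
          rw [Nat.cast_add D]
          exact add_le_add_left hdim _
      _ < (D + n + 2 : ℕ) := Nat.cast_lt.2 (by omega)
  have hone : (contraction w (u.coord (inl i₀))).eval 1 = 1 :=
    (RingHom.congr_fun (evalRingHom_one_comp_contraction w) _).trans (by simp [hconst])
  have hzero : (u.map (contraction w).toRingHom).map (evalRingHom 0) = u := by
    have h := RingHom.congr_fun (evalRingHom_zero_comp_contraction (R := R) hw)
    exact SplitVector.ext (funext fun a => h _) (h _)
  have hpath := reach_map_eval_zero_map_eval_one hdim' hj hk hjk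
    (hu.map (contraction w).toRingHom) hmonic hone
  rw [hzero] at hpath
  have hvw := hvu.trans hpath
  exact (hvw.trans (reach_std (hvw.isotropicUnimodular hv).quad_eq_zero hone)).mono (by omega)

end SplitVector

namespace SplitVector

theorem ofColumn_ite_val_eq_zero {R : Type*} [CommRing R] {r : ℕ} (hr : 0 < r) :
    ofColumn (fun i : Fin (2 * r + 1) => if i.val = 0 then (1 : R) else 0) = std ⟨0, hr⟩ := by
  ext a
  · rcases a with i | i
    · refine if_congr ?_ rfl rfl
      rw [Sum.inl.injEq, Fin.ext_iff]
      rfl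
    · have : 2 * r - i.val ≠ 0 := by omega
      simp [ofColumn, position, std, this]
  · simp [ofColumn, midO, std, hr.ne']

end SplitVector

theorem step_count_le {n D r : ℕ} (hr : 3 ≤ r) (hD : D + 2 ≤ r) :
    r * (r - 1) / 2 + 4 * r + (D + n + 1) * (6 * r + 8) ≤
      n * (12 * r - 8) +
        (n * D + r * (r - 1) / 2) * (r * (r - 1) / 2 + (r - 1 + 1) / 2 + 9 * r - 2) +
          9 * r - 8 := by
  set T := r * (r - 1) / 2
  set W := T + (r - 1 + 1) / 2 + 9 * r - 2
  have hrT : r ≤ T := (Nat.le_div_iff_mul_le two_pos).2 (Nat.mul_le_mul_left r (by omega))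
  have hn : n * (6 * r + 8) ≤ n * (12 * r - 8) := Nat.mul_le_mul_left n (by omega)
  have hDW : (D + 1) * (6 * r + 8) ≤ (T - 1) * W := Nat.mul_le_mul (by omega) (by omega)
  have hTW : T * W = (T - 1) * W + W := by
    rw [← Nat.succ_mul, Nat.succ_eq_add_one, Nat.sub_add_cancel (by omega)]
  have hsplit : (D + n + 1) * (6 * r + 8) = n * (6 * r + 8) + (D + 1) * (6 * r + 8) := by ring
  rw [add_mul (n * D), hTW, hsplit]
  omega

theorem odd_column_bounded_reduction_general
    (C : Type*) [CommRing C] [IsNoetherianRing C] (n D : ℕ) (hdim : ringKrullDim C ≤ D)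
    (r : ℕ) (hr : max 3 (D + 2) ≤ r)
    (b : Fin (2 * r + 1) → MvPolynomial (Fin n) C)
    (hb : b ∈ IUmO r (MvPolynomial (Fin n) C)) :
    ∃ E ∈ EOO r (r * (r - 1) / 2 + 4 * r + (D + n + 1) * (6 * r + 8)) (MvPolynomial (Fin n) C),
      E.mulVec b = fun i : Fin (2 * r + 1) => if i.val = 0 then 1 else 0 := by
  obtain ⟨hr₃, hD⟩ := max_le_iff.1 hr
  have hv := SplitVector.isotropicUnimodular_ofColumn hb
  have hreach : SplitVector.Reach ⊤ (r * (r - 1) / 2 + 4 * r + (D + n + 1) * (6 * r + 8))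
      (SplitVector.ofColumn b) (SplitVector.std ⟨0, by omega⟩) := by
    rcases n with _ | n
    · have hdim₀ : ringKrullDim (MvPolynomial (Fin 0) C) < (Fintype.card (Fin r) - 1 : ℕ) := by
        rw [ringKrullDim_eq_of_ringEquiv (MvPolynomial.isEmptyRingEquiv C (Fin 0)),
          Fintype.card_fin]
        exact hdim.trans_lt (Nat.cast_lt.2 (by omega))
      simpa only [Fintype.card_fin] using
        (hv.reach_std_of_ringKrullDim_lt hdim₀ _).mono (Nat.le_add_right _ _)
    · simpa only [Fintype.card_fin, add_assoc] using
        hv.reach_std_of_mvPolynomial (i₀ := ⟨0, by omega⟩) (j := ⟨1, by omega⟩)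
          (k := ⟨2, by omega⟩) hdim (by rwa [Fintype.card_fin])
          (Fin.ne_of_val_ne one_ne_zero) (Fin.ne_of_val_ne two_ne_zero)
          (Fin.ne_of_val_ne Nat.one_lt_two.ne)
  obtain ⟨E, hE, hEb⟩ := hreach.exists_mem_EOO
  exact ⟨E, hE, SplitVector.ofColumn_injective
    (hEb.trans (SplitVector.ofColumn_ite_val_eq_zero (by omega)).symm)⟩

/-- Bounded reduction of isotropic unimodular columns (odd case): for any
`b ∈ IUm_{2r+1}(C[x_1,…,x_n])`, the first standard basis column `e_1` lies in
`EO(2r+1,A)^{≤N} · b` with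
`N = n(12r−8) + (nD + r(r−1)/2)(r(r−1)/2 + ⌈(r−1)/2⌉ + 9r−2) + 9r−8`. -/
theorem odd_column_bounded_reduction
    (C : Type*) [CommRing C] [IsNoetherianRing C] (n D : ℕ)
    (hdim : ringKrullDim C = (D : WithBot ℕ∞))
    (r : ℕ) (hr : max 3 (D + 2) ≤ r)
    (b : Fin (2 * r + 1) → MvPolynomial (Fin n) C)
    (hb : b ∈ IUmO r (MvPolynomial (Fin n) C)) :
    ∃ E ∈ EOO r
        (n * (12 * r - 8) +
          (n * D + r * (r - 1) / 2) * (r * (r - 1) / 2 + (r - 1 + 1) / 2 + 9 * r - 2) +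
            9 * r - 8)
        (MvPolynomial (Fin n) C),
      E.mulVec b = fun i : Fin (2 * r + 1) => if i.val = 0 then 1 else 0 := by
  obtain ⟨E, hE, hEb⟩ := odd_column_bounded_reduction_general C n D hdim.le r hr b hb
  exact ⟨E, SplitVector.EOO_mono (step_count_le (le_of_max_le_left hr) (le_of_max_le_right hr)) hE,
    hEb⟩
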